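/- arXiv:2310.08664 — 3 statements merged into one kernel-verified Lean document; each statement's English description precedes it below -/
import Mathlib

section
/- Let s_n = |SEP(n)|. Then s_n = ((3 − 2√2)^{−n+1/2}/√π)·(2^{−3/4}·n^{−3/2} + ((12√2 − 9)/(32·2^{1/4}))·n^{−5/2} + o(n^{−5/2})) as n→∞; equivalently, lim_{n→∞} n^{5/2}·(√π·(3 − 2√2)^{n−1/2}·s_n − 2^{−3/4}·n^{−3/2}) = (12√2 − 9)/(32·2^{1/4}). -/
open Finset Filter Real
open scoped Classical

/-- `σ` contains the pattern `τ` (a permutation of `Fin k` given as a function). -/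
def ContainsPattern {n k : ℕ} (σ : Equiv.Perm (Fin n)) (τ : Fin k → Fin k) : Prop :=
  ∃ f : Fin k → Fin n, StrictMono f ∧ ∀ a b : Fin k, τ a < τ b ↔ σ (f a) < σ (f b)

/-- A permutation is separable iff it avoids the patterns 2413 and 3142. -/
def Separable {n : ℕ} (σ : Equiv.Perm (Fin n)) : Prop :=
  ¬ ContainsPattern σ (![1, 3, 0, 2] : Fin 4 → Fin 4) ∧
  ¬ ContainsPattern σ (![2, 0, 3, 1] : Fin 4 → Fin 4)

/-- The set of separable permutations of `[n]`. -/
noncomputable def SEP (n : ℕ) : Finset (Equiv.Perm (Fin n)) :=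
  Finset.univ.filter fun σ => Separable σ

/-- `IsAltSeq σ s l` : `l` is a strictly increasing list of indices along which the values of `σ`
alternate, starting with an ascent if `s = true` and starting with a descent if `s = false`. -/
def IsAltSeq {n : ℕ} (σ : Equiv.Perm (Fin n)) (s : Bool) (l : List (Fin n)) : Prop :=
  l.Chain' (· < ·) ∧
  ∀ j : ℕ, ∀ hj : j + 1 < l.length,
    if decide (j % 2 = 0) = s then
      σ (l.get ⟨j, Nat.lt_of_succ_lt hj⟩) < σ (l.get ⟨j + 1, hj⟩)
    else
      σ (l.get ⟨j + 1, hj⟩) < σ (l.get ⟨j, Nat.lt_of_succ_lt hj⟩)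

/-- The length of the longest alternating subsequence of `σ` of type `(s, e)`, where
`true` stands for ascent and `false` for descent.  An alternating subsequence starting with
an ascent ends with a descent iff its length is odd (and similarly in the other cases), so the
type is encoded by the parity constraint; a singleton counts as a subsequence of types
`(+,-)` and `(-,+)` but not of types `(+,+)` and `(-,-)`. -/
noncomputable def altTypeLen {n : ℕ} (σ : Equiv.Perm (Fin n)) (s e : Bool) : ℕ :=
  sSup {k | ∃ l : List (Fin n), IsAltSeq σ s l ∧ l.length = k ∧
    k % 2 = (if s = e then 0 else 1)}

/-- The length `Aₙ(σ)` of the longest alternating subsequence of `σ`. -/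
noncomputable def altLen {n : ℕ} (σ : Equiv.Perm (Fin n)) : ℕ :=
  sSup {k | ∃ l : List (Fin n), (IsAltSeq σ true l ∨ IsAltSeq σ false l) ∧
    l.length = k ∧ 1 ≤ k}

/-- Expectation with respect to the uniform probability measure on `SEP n`. -/
noncomputable def sepExp (n : ℕ) (f : Equiv.Perm (Fin n) → ℝ) : ℝ :=
  (∑ σ ∈ SEP n, f σ) / (SEP n).card

/-- Variance with respect to the uniform probability measure on `SEP n`. -/
noncomputable def sepVar (n : ℕ) (f : Equiv.Perm (Fin n) → ℝ) : ℝ :=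
  sepExp n (fun σ => (f σ - sepExp n f) ^ 2)

/-- `B₁^{+,n}(σ)`: the length of the first indecomposable block (0-indexed positions). -/
noncomputable def Bplus {n : ℕ} (σ : Equiv.Perm (Fin n)) : ℕ :=
  sInf {j | 1 ≤ j ∧ ∀ i : Fin n, (i : ℕ) < j → (σ i : ℕ) < j}

/-- `B₁^{-,n}(σ)`: the length of the first skew indecomposable block (0-indexed positions). -/
noncomputable def Bminus {n : ℕ} (σ : Equiv.Perm (Fin n)) : ℕ :=
  sInf {j | 1 ≤ j ∧ ∀ i : Fin n, (i : ℕ) < j → n - j ≤ (σ i : ℕ)}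

/-- Expectation over indecomposable separable permutations of `[n]`, i.e. the conditional
expectation under the uniform measure on `SEP n` given `{B₁^{+,n} = n}`. -/
noncomputable def indecExp (n : ℕ) (f : Equiv.Perm (Fin n) → ℝ) : ℝ :=
  (∑ σ ∈ (SEP n).filter (fun σ => Bplus σ = n), f σ) /
    ((SEP n).filter (fun σ => Bplus σ = n)).card

/-- The relation `f i < f j` holds for all `i < k ≤ j < m`. -/
def SplitsAt {α : Type*} [LT α] (f : ℕ → α) (m k : ℕ) : Prop :=
  ∀ i j, i < k → k ≤ j → j < m → f i < f j

theorem exists_splitsAt_succ {α : Type*} [LinearOrder α] {f : ℕ → α} (hf : Function.Injective f)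
    {m : ℕ}
    (h3142 : ∀ a b c d, a < b → b < c → c < d → d < m + 1 →
      ¬ (f b < f d ∧ f d < f a ∧ f a < f c))
    (ih : ∀ k, 2 ≤ k → k ≤ m → ∃ l, 1 ≤ l ∧ l < k ∧
      (SplitsAt f k l ∨ SplitsAt (OrderDual.toDual ∘ f) k l))
    (hm : ∃ k, 1 ≤ k ∧ k < m ∧ SplitsAt f m k) :
    ∃ l, 1 ≤ l ∧ l < m + 1 ∧
      (SplitsAt f (m + 1) l ∨ SplitsAt (OrderDual.toDual ∘ f) (m + 1) l) := by
  obtain ⟨k, ⟨hk1, hkm, hk⟩, hmin⟩ : ∃ k, (1 ≤ k ∧ k < m ∧ SplitsAt f m k) ∧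
      ∀ l, l < k → ¬ (1 ≤ l ∧ l < m ∧ SplitsAt f m l) :=
    ⟨Nat.find hm, Nat.find_spec hm, fun l hl => Nat.find_min hm hl⟩
  by_cases habove : ∀ i, i < k → f i < f m
  · refine ⟨k, hk1, by omega, Or.inl fun i j hi hj hjm => ?_⟩
    rcases Nat.lt_succ_iff_lt_or_eq.mp hjm with h | rfl
    · exact hk i j hi hj h
    · exact habove i hi
  by_cases hbelow : ∀ i, i < k → f m < f i
  · refine ⟨m, by omega, by omega, Or.inr fun i j hi hj hjm => ?_⟩
    obtain rfl : j = m := by omega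
    change f j < f i
    rcases lt_or_ge i k with h | h
    · exact hbelow i h
    · exact (hbelow 0 (by omega)).trans (hk 0 i (by omega) h hi)
  exfalso
  push Not at habove hbelow
  obtain ⟨u, hu, hum⟩ := habove
  obtain ⟨v, hv, hvm⟩ := hbelow
  have hum' : f m < f u := lt_of_le_of_ne hum fun h => by have := hf h; omega
  have hvm' : f v < f m := lt_of_le_of_ne hvm fun h => by have := hf h; omega
  have huv : u ≠ v := by rintro rfl; exact lt_asymm hum' hvm'
  obtain ⟨l, hl1, hlk, hl | hl⟩ := ih k (by omega) hkm.le
  · refine hmin l hlk ⟨hl1, by omega, fun i j hi hj hjm => ?_⟩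
    rcases lt_or_ge j k with h | h
    · exact hl i j hi hj h
    · exact hk i j (by omega) h hjm
  have hl' : ∀ i j, i < l → l ≤ j → j < k → f j < f i := hl
  obtain ⟨u', hu'l, hu'm⟩ : ∃ u', u' < l ∧ f m < f u' := by
    rcases lt_or_ge u l with h | h
    · exact ⟨u, h, hum'⟩
    · exact ⟨0, by omega, hum'.trans (hl' 0 u (by omega) h hu)⟩
  obtain ⟨v', hv'l, hv'k, hv'm⟩ : ∃ v', l ≤ v' ∧ v' < k ∧ f v' < f m := by
    rcases lt_or_ge v l with h | h
    · exact ⟨l, le_rfl, hlk, (hl' v l h le_rfl hlk).trans hvm'⟩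
    · exact ⟨v, h, hv, hvm'⟩
  exact h3142 u' v' k m (by omega) hv'k hkm (by omega)
    ⟨hv'm, hu'm, hk u' k (by omega) le_rfl hkm⟩

theorem exists_splitsAt {α : Type*} [LinearOrder α] {f : ℕ → α} (hf : Function.Injective f)
    {n : ℕ}
    (h2413 : ∀ a b c d, a < b → b < c → c < d → d < n → ¬ (f c < f a ∧ f a < f d ∧ f d < f b))
    (h3142 : ∀ a b c d, a < b → b < c → c < d → d < n → ¬ (f b < f d ∧ f d < f a ∧ f a < f c))
    (m : ℕ) (hm : 2 ≤ m) (hmn : m ≤ n) :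
    ∃ l, 1 ≤ l ∧ l < m ∧ (SplitsAt f m l ∨ SplitsAt (OrderDual.toDual ∘ f) m l) := by
  induction m using Nat.strong_induction_on with
  | _ m ih =>
    obtain rfl | ⟨m, rfl, hm'⟩ : m = 2 ∨ ∃ m', m = m' + 1 ∧ 2 ≤ m' := by
      rcases hm.eq_or_lt with h | h
      · exact Or.inl h.symm
      · exact Or.inr ⟨m - 1, by omega, by omega⟩
    · refine ⟨1, le_rfl, by omega, ?_⟩
      rcases lt_or_gt_of_ne (hf.ne zero_ne_one) with h | h
      · left
        intro i j hi hj hj'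
        obtain rfl : i = 0 := by omega
        obtain rfl : j = 1 := by omega
        exact h
      · right
        intro i j hi hj hj'
        obtain rfl : i = 0 := by omega
        obtain rfl : j = 1 := by omega
        exact h
    · have ih' : ∀ k, 2 ≤ k → k ≤ m → ∃ l, 1 ≤ l ∧ l < k ∧
          (SplitsAt f k l ∨ SplitsAt (OrderDual.toDual ∘ f) k l) :=
        fun k h2 hk => ih k (by omega) h2 (by omega)
      obtain ⟨l, hl1, hlm, hl | hl⟩ := ih' m hm' le_rfl
      · exact exists_splitsAt_succ hf
          (fun a b c d hab hbc hcd hd => h3142 a b c d hab hbc hcd (by omega)) ih'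
          ⟨l, hl1, hlm, hl⟩
      · obtain ⟨k, hk1, hkm, hk⟩ := exists_splitsAt_succ (f := OrderDual.toDual ∘ f) (m := m)
          (OrderDual.toDual.injective.comp hf)
          (fun a b c d hab hbc hcd hd ⟨h₁, h₂, h₃⟩ =>
            h2413 a b c d hab hbc hcd (by omega) ⟨h₃, h₂, h₁⟩)
          (fun k h2 hk => by
            obtain ⟨l, h₁, h₂, h₃⟩ := ih' k h2 hk
            exact ⟨l, h₁, h₂, h₃.symm⟩)
          ⟨l, hl1, hlm, hl⟩
        exact ⟨k, hk1, hkm, hk.symm⟩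

theorem containsPattern_2413_iff {n : ℕ} (σ : Equiv.Perm (Fin n)) :
    ContainsPattern σ (![1, 3, 0, 2] : Fin 4 → Fin 4) ↔
      ∃ a b c d, a < b ∧ b < c ∧ c < d ∧ σ c < σ a ∧ σ a < σ d ∧ σ d < σ b := by
  constructor
  · rintro ⟨f, hf, h⟩
    refine ⟨f 0, f 1, f 2, f 3, hf (by decide), hf (by decide), hf (by decide),
      (h 2 0).1 (by decide), (h 0 3).1 (by decide), (h 3 1).1 (by decide)⟩
  · rintro ⟨a, b, c, d, hab, hbc, hcd, h₁, h₂, h₃⟩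
    refine ⟨![a, b, c, d], ?_, ?_⟩
    · refine Fin.strictMono_iff_lt_succ.2 fun i => ?_
      fin_cases i <;> simpa
    · intro x y
      fin_cases x <;> fin_cases y <;> simp <;> order

theorem containsPattern_3142_iff {n : ℕ} (σ : Equiv.Perm (Fin n)) :
    ContainsPattern σ (![2, 0, 3, 1] : Fin 4 → Fin 4) ↔
      ∃ a b c d, a < b ∧ b < c ∧ c < d ∧ σ b < σ d ∧ σ d < σ a ∧ σ a < σ c := by
  constructor
  · rintro ⟨f, hf, h⟩
    refine ⟨f 0, f 1, f 2, f 3, hf (by decide), hf (by decide), hf (by decide),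
      (h 1 3).1 (by decide), (h 3 0).1 (by decide), (h 0 2).1 (by decide)⟩
  · rintro ⟨a, b, c, d, hab, hbc, hcd, h₁, h₂, h₃⟩
    refine ⟨![a, b, c, d], ?_, ?_⟩
    · refine Fin.strictMono_iff_lt_succ.2 fun i => ?_
      fin_cases i <;> simpa
    · intro x y
      fin_cases x <;> fin_cases y <;> simp <;> order

theorem separable_iff {n : ℕ} (σ : Equiv.Perm (Fin n)) :
    Separable σ ↔ ∀ a b c d, a < b → b < c → c < d →
      ¬ (σ c < σ a ∧ σ a < σ d ∧ σ d < σ b) ∧ ¬ (σ b < σ d ∧ σ d < σ a ∧ σ a < σ c) := by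
  rw [Separable, containsPattern_2413_iff, containsPattern_3142_iff]
  grind

/-- The first `k` entries of `σ` lie below all the others. -/
def SumSplit {n : ℕ} (σ : Equiv.Perm (Fin n)) (k : ℕ) : Prop :=
  ∀ i j : Fin n, (i : ℕ) < k → k ≤ (j : ℕ) → σ i < σ j

/-- `σ` is a direct sum of two nonempty permutations. -/
def SumDecomposable {n : ℕ} (σ : Equiv.Perm (Fin n)) : Prop :=
  ∃ k, 1 ≤ k ∧ k < n ∧ SumSplit σ k

/-- The complement of `σ`, reversing the order of the values. -/
def complement {n : ℕ} (σ : Equiv.Perm (Fin n)) : Equiv.Perm (Fin n) :=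
  σ.trans Fin.revPerm

theorem complement_lt_complement {n : ℕ} (σ : Equiv.Perm (Fin n)) (i j : Fin n) :
    complement σ i < complement σ j ↔ σ j < σ i := by
  simp [complement]

theorem complement_complement {n : ℕ} (σ : Equiv.Perm (Fin n)) :
    complement (complement σ) = σ := by
  ext; simp [complement]

theorem separable_complement {n : ℕ} (σ : Equiv.Perm (Fin n)) :
    Separable (complement σ) ↔ Separable σ := by
  simp only [separable_iff, complement_lt_complement]
  grind

theorem Separable.sumDecomposable_or {n : ℕ} {σ : Equiv.Perm (Fin n)} (h : Separable σ)
    (hn : 2 ≤ n) : SumDecomposable σ ∨ SumDecomposable (complement σ) := by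
  let f : ℕ → ℕ := fun i => if h : i < n then σ ⟨i, h⟩ else i
  have hfσ (i : Fin n) : f i = σ i := by simp [f]
  have hf : Function.Injective f := by
    intro i j hij
    simp only [f] at hij
    split_ifs at hij with h₁ h₂ h₂
    · simpa [Fin.val_inj] using hij
    · omega
    · omega
    · exact hij
  have hf' (i j : Fin n) : f i < f j ↔ σ i < σ j := by rw [hfσ, hfσ, Fin.lt_def]
  rw [separable_iff] at h
  obtain ⟨k, hk1, hkn, hk⟩ := exists_splitsAt hf (n := n)
    (fun a b c d hab hbc hcd hd => by
      simpa only [← hf'] using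
        (h ⟨a, by omega⟩ ⟨b, by omega⟩ ⟨c, by omega⟩ ⟨d, hd⟩ hab hbc hcd).1)
    (fun a b c d hab hbc hcd hd => by
      simpa only [← hf'] using
        (h ⟨a, by omega⟩ ⟨b, by omega⟩ ⟨c, by omega⟩ ⟨d, hd⟩ hab hbc hcd).2)
    n hn le_rfl
  refine hk.imp (fun hk => ⟨k, hk1, hkn, fun i j hi hj => ?_⟩)
    (fun hk => ⟨k, hk1, hkn, fun i j hi hj => ?_⟩)
  · exact (hf' i j).1 (hk i j hi hj j.2)
  · rw [complement_lt_complement]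
    exact (hf' j i).1 (hk i j hi hj j.2)

theorem not_sumDecomposable_complement {n : ℕ} {σ : Equiv.Perm (Fin n)}
    (h : SumDecomposable σ) : ¬ SumDecomposable (complement σ) := by
  rintro ⟨l, hl1, hln, hl⟩
  obtain ⟨k, hk1, hkn, hk⟩ := h
  have h₁ := hk ⟨0, by omega⟩ ⟨n - 1, by omega⟩ (by simp; omega) (by simp; omega)
  have h₂ := hl ⟨0, by omega⟩ ⟨n - 1, by omega⟩ (by simp; omega) (by simp; omega)
  rw [complement_lt_complement] at h₂
  exact lt_asymm h₁ h₂

/-- The direct sum of two permutations. -/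
def directSum {j m : ℕ} (α : Equiv.Perm (Fin j)) (β : Equiv.Perm (Fin m)) :
    Equiv.Perm (Fin (j + m)) :=
  finSumFinEquiv.permCongr (Equiv.Perm.sumCongr α β)

theorem directSum_castAdd {j m : ℕ} (α : Equiv.Perm (Fin j)) (β : Equiv.Perm (Fin m))
    (i : Fin j) : directSum α β (Fin.castAdd m i) = Fin.castAdd m (α i) := by
  simp [directSum, Equiv.permCongr_apply]

theorem directSum_natAdd {j m : ℕ} (α : Equiv.Perm (Fin j)) (β : Equiv.Perm (Fin m))
    (i : Fin m) : directSum α β (Fin.natAdd j i) = Fin.natAdd j (β i) := by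
  simp [directSum, Equiv.permCongr_apply]

theorem directSum_injective {j m : ℕ} {α α' : Equiv.Perm (Fin j)} {β β' : Equiv.Perm (Fin m)}
    (h : directSum α β = directSum α' β') : α = α' ∧ β = β' := by
  constructor
  · ext i
    have := congrArg (fun σ => (σ (Fin.castAdd m i) : ℕ)) h
    simpa [directSum_castAdd] using this
  · ext i
    have := congrArg (fun σ => (σ (Fin.natAdd j i) : ℕ)) h
    simpa [directSum_natAdd] using this

theorem SumSplit.apply_lt {n k : ℕ} {σ : Equiv.Perm (Fin n)} (h : SumSplit σ k) (hk : k < n)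
    {i : Fin n} (hi : (i : ℕ) < k) : (σ i : ℕ) < k := by
  by_contra! hσ
  have hsub : (Finset.Ici (⟨k, hk⟩ : Fin n)).map σ.toEmbedding ⊆ Finset.Ioi (σ i) := by
    intro y hy
    obtain ⟨x, hx, rfl⟩ := Finset.mem_map.1 hy
    exact Finset.mem_Ioi.2 (h i x hi (by simpa [Fin.le_def] using hx))
  have := Finset.card_le_card hsub
  rw [Finset.card_map, Fin.card_Ici, Fin.card_Ioi] at this
  simp only at this
  omega

theorem SumSplit.exists_directSum {j m : ℕ} (hm : 1 ≤ m) {σ : Equiv.Perm (Fin (j + m))}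
    (h : SumSplit σ j) : ∃ α β, directSum α β = σ := by
  have hmaps : Set.MapsTo (finSumFinEquiv.permCongr.symm σ)
      (Set.range (Sum.inl : Fin j → Fin j ⊕ Fin m)) (Set.range Sum.inl) := by
    rintro _ ⟨i, rfl⟩
    have hi : (σ (Fin.castAdd m i) : ℕ) < j := h.apply_lt (by omega) (by simp)
    refine ⟨⟨σ (Fin.castAdd m i), hi⟩, finSumFinEquiv.injective ?_⟩
    ext
    simp [Equiv.permCongr_symm, Equiv.permCongr_apply]
  obtain ⟨⟨α, β⟩, hαβ⟩ := Equiv.Perm.mem_sumCongrHom_range_of_perm_mapsTo_inl hmaps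
  refine ⟨α, β, ?_⟩
  rw [Equiv.Perm.sumCongrHom_apply] at hαβ
  rw [directSum, hαβ, Equiv.apply_symm_apply]

theorem separable_directSum {j m : ℕ} (α : Equiv.Perm (Fin j)) (β : Equiv.Perm (Fin m)) :
    Separable (directSum α β) ↔ Separable α ∧ Separable β := by
  simp only [separable_iff, Fin.lt_def]
  constructor
  · refine fun h => ⟨fun a b c d hab hbc hcd => ?_, fun a b c d hab hbc hcd => ?_⟩
    · simpa only [directSum_castAdd, Fin.val_castAdd] using
        h (a.castAdd m) (b.castAdd m) (c.castAdd m) (d.castAdd m) hab hbc hcd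
    · simpa only [directSum_natAdd, Fin.val_natAdd, add_lt_add_iff_left] using
        h (a.natAdd j) (b.natAdd j) (c.natAdd j) (d.natAdd j) (by simpa) (by simpa) (by simpa)
  · rintro ⟨hα, hβ⟩ a b c d
    induction a using Fin.addCases <;> induction b using Fin.addCases <;>
      induction c using Fin.addCases <;> induction d using Fin.addCases <;>
      simp only [directSum_castAdd, directSum_natAdd, Fin.val_castAdd, Fin.val_natAdd,
        add_lt_add_iff_left] <;>
      first | exact hα _ _ _ _ | exact hβ _ _ _ _ | omega

theorem sumSplit_directSum {j m : ℕ} (α : Equiv.Perm (Fin j)) (β : Equiv.Perm (Fin m)) :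
    SumSplit (directSum α β) j := by
  intro a b ha hb
  induction a using Fin.addCases <;> induction b using Fin.addCases <;>
    simp only [directSum_castAdd, directSum_natAdd, Fin.lt_def, Fin.val_castAdd,
        Fin.val_natAdd] at * <;> omega

theorem sumSplit_directSum_iff {j m k : ℕ} (hk : k < j) (α : Equiv.Perm (Fin j))
    (β : Equiv.Perm (Fin m)) : SumSplit (directSum α β) k ↔ SumSplit α k := by
  constructor
  · intro h a b ha hb
    have := h (a.castAdd m) (b.castAdd m) (by simpa) (by simpa)
    rwa [directSum_castAdd, directSum_castAdd, Fin.lt_def] at this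
  · intro h a b ha hb
    induction a using Fin.addCases <;> induction b using Fin.addCases <;>
      simp only [directSum_castAdd, directSum_natAdd, Fin.lt_def, Fin.val_castAdd,
        Fin.val_natAdd] at * <;> try omega
    exact h _ _ ha hb

/-- `k` is the length of the first sum-indecomposable block of `σ`. -/
def IsFirstBlock {n : ℕ} (σ : Equiv.Perm (Fin n)) (k : ℕ) : Prop :=
  SumSplit σ k ∧ ∀ l, 1 ≤ l → l < k → ¬ SumSplit σ l

theorem card_filter_isFirstBlock {j m : ℕ} (hm : 1 ≤ m) :
    #{σ ∈ SEP (j + m) | IsFirstBlock σ j} = #{σ ∈ SEP j | ¬ SumDecomposable σ} * #(SEP m) := by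
  rw [← Finset.card_product]
  symm
  refine Finset.card_bij (fun p _ => directSum p.1 p.2) ?_ ?_ ?_
  · rintro ⟨α, β⟩ h
    simp only [SEP, Finset.mem_product, Finset.mem_filter, Finset.mem_univ, true_and] at h ⊢
    refine ⟨(separable_directSum α β).2 ⟨h.1.1, h.2⟩, sumSplit_directSum α β,
      fun l hl1 hlj hl => h.1.2 ⟨l, hl1, hlj, (sumSplit_directSum_iff hlj α β).1 hl⟩⟩
  · rintro ⟨α, β⟩ _ ⟨α', β'⟩ _ h
    obtain ⟨rfl, rfl⟩ := directSum_injective h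
    rfl
  · intro σ h
    simp only [SEP, Finset.mem_filter, Finset.mem_univ, true_and] at h
    obtain ⟨hσ, hj, hmin⟩ := h
    obtain ⟨α, β, rfl⟩ := hj.exists_directSum hm
    rw [separable_directSum] at hσ
    refine ⟨(α, β), ?_, rfl⟩
    simp only [SEP, Finset.mem_product, Finset.mem_filter, Finset.mem_univ, true_and]
    exact ⟨⟨hσ.1, fun ⟨l, hl1, hlj, hl⟩ =>
      hmin l hl1 hlj ((sumSplit_directSum_iff hlj α β).2 hl)⟩, hσ.2⟩

theorem card_filter_sumDecomposable (n : ℕ) :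
    #{σ ∈ SEP n | SumDecomposable σ} =
      ∑ k ∈ Finset.Ico 1 n, #{σ ∈ SEP k | ¬ SumDecomposable σ} * #(SEP (n - k)) := by
  have hunion : {σ ∈ SEP n | SumDecomposable σ} =
      (Finset.Ico 1 n).biUnion fun k => {σ ∈ SEP n | IsFirstBlock σ k} := by
    ext σ
    simp only [Finset.mem_filter, Finset.mem_biUnion, Finset.mem_Ico]
    constructor
    · rintro ⟨hσ, h⟩
      refine ⟨Nat.find h, ⟨(Nat.find_spec h).1, (Nat.find_spec h).2.1⟩, hσ,
        (Nat.find_spec h).2.2, fun l hl1 hl hs => Nat.find_min h hl ⟨hl1, ?_, hs⟩⟩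
      exact hl.trans (Nat.find_spec h).2.1
    · rintro ⟨k, hk, hσ, h, -⟩
      exact ⟨hσ, k, hk.1, hk.2, h⟩
  rw [hunion, Finset.card_biUnion]
  · refine Finset.sum_congr rfl fun k hk => ?_
    rw [Finset.mem_Ico] at hk
    obtain ⟨m, rfl⟩ := Nat.exists_eq_add_of_le hk.2.le
    rw [card_filter_isFirstBlock (by omega), Nat.add_sub_cancel_left]
  · intro k hk l hl hkl
    rw [Finset.mem_coe, Finset.mem_Ico] at hk hl
    refine Finset.disjoint_filter.2 fun σ _ h₁ h₂ => ?_
    rcases lt_or_gt_of_ne hkl with h | h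
    · exact h₂.2 k hk.1 h h₁.1
    · exact h₁.2 l hl.1 h h₂.1

theorem card_filter_not_sumDecomposable {n : ℕ} (hn : 2 ≤ n) :
    #{σ ∈ SEP n | ¬ SumDecomposable σ} = #{σ ∈ SEP n | SumDecomposable σ} := by
  refine Finset.card_nbij' complement complement ?_ ?_
    (fun σ _ => complement_complement σ) (fun σ _ => complement_complement σ)
  · intro σ h
    simp only [SEP, Finset.coe_filter, Finset.mem_filter, Finset.mem_univ, true_and,
      Set.mem_ofPred_eq, separable_complement] at h ⊢
    exact ⟨h.1, (h.1.sumDecomposable_or hn).resolve_left h.2⟩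
  · intro σ h
    simp only [SEP, Finset.coe_filter, Finset.mem_filter, Finset.mem_univ, true_and,
      Set.mem_ofPred_eq, separable_complement] at h ⊢
    exact ⟨h.1, not_sumDecomposable_complement h.2⟩

theorem card_SEP_one : #(SEP 1) = 1 := by
  rw [SEP, Finset.filter_true_of_mem, Finset.card_univ, Fintype.card_perm]
  · rfl
  · intro σ _
    rw [separable_iff]
    intro a b c d hab
    omega

theorem two_mul_card_filter_not_sumDecomposable {n : ℕ} (hn : 1 ≤ n) :
    2 * #{σ ∈ SEP n | ¬ SumDecomposable σ} = #(SEP n) + if n = 1 then 1 else 0 := by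
  have h : #{σ ∈ SEP n | SumDecomposable σ} + #{σ ∈ SEP n | ¬ SumDecomposable σ} = #(SEP n) := by
    convert Finset.card_filter_add_card_filter_not (s := SEP n) SumDecomposable
  split_ifs with h1
  · subst h1
    rw [card_filter_sumDecomposable, card_SEP_one] at h
    rw [card_SEP_one]
    simp only [Finset.Ico_self, Finset.sum_empty] at h
    omega
  · have := card_filter_not_sumDecomposable (n := n) (by omega)
    omega

theorem card_SEP_eq {n : ℕ} (hn : 2 ≤ n) :
    #(SEP n) = #(SEP (n - 1)) + ∑ k ∈ Finset.Ico 1 n, #(SEP k) * #(SEP (n - k)) := by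
  have h := two_mul_card_filter_not_sumDecomposable (n := n) (by omega)
  rw [card_filter_not_sumDecomposable hn, card_filter_sumDecomposable, if_neg (by omega),
    add_zero, Finset.mul_sum] at h
  rw [← h]
  have : ∀ k ∈ Finset.Ico 1 n, 2 * (#{σ ∈ SEP k | ¬ SumDecomposable σ} * #(SEP (n - k))) =
      #(SEP k) * #(SEP (n - k)) + if k = 1 then #(SEP (n - 1)) else 0 := by
    intro k hk
    rw [Finset.mem_Ico] at hk
    rw [← mul_assoc, two_mul_card_filter_not_sumDecomposable hk.1, add_mul]
    split_ifs with h1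
    · rw [h1, one_mul]
    · rw [zero_mul]
  rw [Finset.sum_congr rfl this, Finset.sum_add_distrib, Finset.sum_ite_eq',
    if_pos (by simp; omega), add_comm]

/-- The Taylor coefficients of `√(1 - x)`. -/
noncomputable def sqrtCoeff : ℕ → ℝ
  | 0 => 1
  | n + 1 => -catalan n / (2 * 4 ^ n)

theorem mk_sqrtCoeff_sq : (PowerSeries.mk sqrtCoeff) ^ 2 = 1 - PowerSeries.X := by
  set B : PowerSeries ℝ := PowerSeries.rescale (1 / 4 : ℝ)
    (PowerSeries.map (Nat.castRingHom ℝ) PowerSeries.catalanSeries) with hB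
  have hBeq : B ^ 2 * (PowerSeries.C (1 / 4 : ℝ) * PowerSeries.X) + 1 = B := by
    have h := congrArg (fun f => PowerSeries.rescale (1 / 4 : ℝ)
      (PowerSeries.map (Nat.castRingHom ℝ) f)) PowerSeries.catalanSeries_sq_mul_X_add_one
    simpa only [map_add, map_mul, map_pow, map_one, PowerSeries.map_X, PowerSeries.rescale_X,
      ← hB] using h
  have hA : PowerSeries.mk sqrtCoeff =
      1 - PowerSeries.C (1 / 2 : ℝ) * (PowerSeries.X * B) := by
    ext n
    cases n with
    | zero => simp [sqrtCoeff]
    | succ n =>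
      rw [map_sub, PowerSeries.coeff_C_mul, PowerSeries.coeff_succ_X_mul, hB,
        PowerSeries.coeff_rescale, PowerSeries.coeff_map, PowerSeries.catalanSeries_coeff,
        PowerSeries.coeff_mk, PowerSeries.coeff_one, if_neg n.succ_ne_zero, sqrtCoeff,
        Nat.coe_castRingHom, div_pow, one_pow]
      field_simp
      ring
  have h2 : (PowerSeries.C (1 / 2 : ℝ)) * 2 = 1 := by
    rw [← map_ofNat (PowerSeries.C (R := ℝ)) 2, ← map_mul]
    norm_num
  have h4 : (PowerSeries.C (1 / 4 : ℝ)) = PowerSeries.C (1 / 2 : ℝ) * PowerSeries.C (1 / 2 : ℝ) := by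
    rw [← map_mul]
    norm_num
  rw [hA]
  rw [h4] at hBeq
  linear_combination PowerSeries.X * hBeq - PowerSeries.X * B * h2

/-- The generating function of separable permutations of positive size. -/
noncomputable def sepSeries : PowerSeries ℝ :=
  PowerSeries.mk fun n => if n = 0 then 0 else (#(SEP n) : ℝ)

theorem sepSeries_eq : sepSeries = PowerSeries.X + PowerSeries.X * sepSeries + sepSeries ^ 2 := by
  have hsum (n : ℕ) : PowerSeries.coeff n (sepSeries ^ 2) =
      ∑ k ∈ Finset.Ico 1 n, (#(SEP k) : ℝ) * #(SEP (n - k)) := by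
    rw [sq, PowerSeries.coeff_mul, Finset.Nat.sum_antidiagonal_eq_sum_range_succ_mk]
    symm
    refine Finset.sum_subset_zero_on_sdiff (fun k hk => ?_) (fun k hk => ?_) (fun k hk => ?_)
    · rw [Finset.mem_Ico] at hk
      rw [Finset.mem_range]
      omega
    · rw [Finset.mem_sdiff, Finset.mem_range, Finset.mem_Ico] at hk
      obtain rfl | h : k = 0 ∨ n - k = 0 := by omega
      · simp [sepSeries]
      · simp [sepSeries, h]
    · rw [Finset.mem_Ico] at hk
      simp [sepSeries, show k ≠ 0 by omega, show n - k ≠ 0 by omega]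
  ext n
  rw [map_add, map_add, PowerSeries.coeff_X, hsum]
  rcases n with _ | _ | n
  · simp [sepSeries]
  · simp [sepSeries, card_SEP_one, PowerSeries.coeff_succ_X_mul]
  · rw [PowerSeries.coeff_succ_X_mul]
    simp only [sepSeries, PowerSeries.coeff_mk]
    rw [card_SEP_eq (n := n + 2) (by omega)]
    simp

theorem one_sub_X_sub_two_mul_sepSeries {r s : ℝ} (hrs : r * s = 1) (hadd : r + s = 6) :
    1 - PowerSeries.X - 2 * sepSeries =
      PowerSeries.rescale s (PowerSeries.mk sqrtCoeff) *
        PowerSeries.rescale r (PowerSeries.mk sqrtCoeff) := by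
  have hres (t : ℝ) : PowerSeries.rescale t (PowerSeries.mk sqrtCoeff) ^ 2 =
      1 - PowerSeries.C t * PowerSeries.X := by
    rw [← map_pow, mk_sqrtCoeff_sq, map_sub, map_one, PowerSeries.rescale_X]
  have hsq : (1 - PowerSeries.X - 2 * sepSeries) ^ 2 =
      (PowerSeries.rescale s (PowerSeries.mk sqrtCoeff) *
        PowerSeries.rescale r (PowerSeries.mk sqrtCoeff)) ^ 2 := by
    rw [mul_pow, hres, hres]
    have h₁ : (PowerSeries.C r : PowerSeries ℝ) * PowerSeries.C s = 1 := by
      rw [← map_mul, hrs, map_one]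
    have h₂ : (PowerSeries.C r : PowerSeries ℝ) + PowerSeries.C s = 6 := by
      rw [← map_add, hadd, map_ofNat]
    linear_combination (-4) * sepSeries_eq - PowerSeries.X ^ 2 * h₁ + PowerSeries.X * h₂
  rcases sq_eq_sq_iff_eq_or_eq_neg.1 hsq with h | h
  · exact h
  · have := congrArg PowerSeries.constantCoeff h
    have h₁ : PowerSeries.constantCoeff sepSeries = 0 := by
      rw [← PowerSeries.coeff_zero_eq_constantCoeff_apply, sepSeries, PowerSeries.coeff_mk,
        if_pos rfl]
    have h₂ (t : ℝ) : PowerSeries.constantCoeff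
        (PowerSeries.rescale t (PowerSeries.mk sqrtCoeff)) = 1 := by
      rw [← PowerSeries.coeff_zero_eq_constantCoeff_apply, PowerSeries.coeff_rescale,
        PowerSeries.coeff_mk, pow_zero, one_mul, sqrtCoeff]
    rw [map_sub, map_sub, map_one, map_mul, map_neg, map_mul, h₁, h₂, h₂,
      PowerSeries.constantCoeff_X] at this
    norm_num at this

theorem card_SEP_eq_sum {n : ℕ} (hn : 2 ≤ n) {r s : ℝ} (hrs : r * s = 1) (hadd : r + s = 6) :
    r ^ n * #(SEP n) = -(1 / 2) *
      ∑ k ∈ Finset.range (n + 1), sqrtCoeff (n - k) * (sqrtCoeff k * (r ^ 2) ^ k) := by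
  have h := congrArg (PowerSeries.coeff n) (one_sub_X_sub_two_mul_sepSeries hrs hadd)
  rw [mul_comm (PowerSeries.rescale s _), PowerSeries.coeff_mul,
    Finset.Nat.sum_antidiagonal_eq_sum_range_succ_mk, map_sub, map_sub, PowerSeries.coeff_one,
    PowerSeries.coeff_X, if_neg (by omega), if_neg (by omega),
    ← map_ofNat (PowerSeries.C (R := ℝ)) 2, PowerSeries.coeff_C_mul] at h
  simp only [sepSeries, PowerSeries.coeff_rescale, PowerSeries.coeff_mk,
    if_neg (show n ≠ 0 by omega)] at h
  have h' : (#(SEP n) : ℝ) = -(1 / 2) *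
      ∑ k ∈ Finset.range (n + 1), r ^ k * sqrtCoeff k * (s ^ (n - k) * sqrtCoeff (n - k)) := by
    linarith
  rw [h', mul_left_comm, Finset.mul_sum]
  congr 1
  refine Finset.sum_congr rfl fun k hk => ?_
  obtain ⟨m, rfl⟩ := Nat.exists_eq_add_of_le (Finset.mem_range_succ_iff.1 hk)
  rw [Nat.add_sub_cancel_left]
  have hm : r ^ m * s ^ m = 1 := by rw [← mul_pow, hrs, one_pow]
  linear_combination (r ^ k * r ^ k * sqrtCoeff k * sqrtCoeff m) * hm

theorem sqrtCoeff_succ (n : ℕ) :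
    sqrtCoeff (n + 1) = sqrtCoeff n * ((2 * n - 1) / (2 * n + 2)) := by
  cases n with
  | zero => norm_num [sqrtCoeff]
  | succ n =>
    have h : ((n : ℝ) + 2) * catalan (n + 1) = 2 * (2 * n + 1) * catalan n := by
      have h₁ := succ_mul_catalan_eq_centralBinom (n + 1)
      have h₂ := succ_mul_catalan_eq_centralBinom n
      have h₃ := Nat.succ_mul_centralBinom_succ n
      rw [← h₁, ← h₂] at h₃
      have h₄ : ((n : ℝ) + 1) * ((n + 1 + 1) * catalan (n + 1)) =
          2 * (2 * n + 1) * ((n + 1) * catalan n) := by exact_mod_cast h₃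
      have : (n : ℝ) + 1 ≠ 0 := by positivity
      exact mul_left_cancel₀ this (by linear_combination h₄)
    simp only [sqrtCoeff]
    push_cast
    rw [pow_succ]
    field_simp
    linear_combination -2 * h

theorem sqrtCoeff_succ_neg (n : ℕ) : sqrtCoeff (n + 1) < 0 := by
  have : 0 < catalan n := by
    have h := succ_mul_catalan_eq_centralBinom n
    have := n.centralBinom_pos
    rw [← h] at this
    exact Nat.pos_of_mul_pos_left this
  rw [sqrtCoeff, neg_div]
  exact neg_neg_of_pos (by positivity)

theorem abs_sqrtCoeff_le_one (n : ℕ) : |sqrtCoeff n| ≤ 1 := by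
  induction n with
  | zero => simp [sqrtCoeff]
  | succ n ih =>
    rw [sqrtCoeff_succ, abs_mul]
    refine mul_le_one₀ ih (abs_nonneg _) ?_
    have : (0 : ℝ) ≤ n := n.cast_nonneg
    rw [abs_le, div_le_iff₀ (by positivity), le_div_iff₀ (by positivity)]
    constructor <;> linarith

/-- The square of `centralBinom n / 4 ^ n`. -/
noncomputable def wallisSq (n : ℕ) : ℝ := (sqrtCoeff n * (2 * n - 1)) ^ 2

theorem wallisSq_succ (n : ℕ) :
    wallisSq (n + 1) = wallisSq n * ((2 * n + 1) / (2 * n + 2)) ^ 2 := by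
  simp only [wallisSq, sqrtCoeff_succ]
  push_cast
  field_simp
  ring

theorem wallisSq_pos (n : ℕ) : 0 < wallisSq n := by
  induction n with
  | zero => norm_num [wallisSq, sqrtCoeff]
  | succ n ih => rw [wallisSq_succ]; positivity

theorem wallisSq_mul_W (n : ℕ) : wallisSq n * (2 * n + 1) * Wallis.W n = 1 := by
  induction n with
  | zero => norm_num [wallisSq, sqrtCoeff, Wallis.W]
  | succ n ih =>
    rw [wallisSq_succ, Wallis.W_succ]
    refine Eq.trans ?_ ih
    push_cast
    field_simp
    ring

theorem tendsto_mul_wallisSq : Tendsto (fun n : ℕ => n * wallisSq n) atTop (nhds (1 / π)) := by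
  have h₁ : Tendsto (fun n : ℕ => (n : ℝ) / (2 * n + 1)) atTop (nhds (1 / 2)) := by
    have := (tendsto_natCast_div_add_atTop (1 / 2 : ℝ)).mul_const (1 / 2 : ℝ)
    rw [one_mul] at this
    refine this.congr fun n => ?_
    field_simp
  have h₂ := h₁.div Wallis.tendsto_W_nhds_pi_div_two (by positivity)
  have h₃ : (1 / 2 : ℝ) / (π / 2) = 1 / π := by field_simp
  rw [h₃] at h₂
  refine h₂.congr fun n => ?_
  have hW := Wallis.W_pos n
  have := wallisSq_mul_W n
  change (n : ℝ) / (2 * n + 1) / Wallis.W n = _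
  rw [div_div, div_eq_iff (by positivity)]
  linear_combination -(n : ℝ) * this

theorem tendsto_wallisSq : Tendsto wallisSq atTop (nhds 0) := by
  have := tendsto_mul_wallisSq.mul (tendsto_inv_atTop_nhds_zero_nat (𝕜 := ℝ))
  rw [mul_zero] at this
  refine this.congr' ?_
  filter_upwards [eventually_ne_atTop 0] with n hn
  have : (n : ℝ) ≠ 0 := by exact_mod_cast hn
  field_simp

theorem wallisSq_upper (n : ℕ) : wallisSq n * (n + 1 / 4) ≤ 1 / π := by
  have hmono : Monotone fun n : ℕ => wallisSq n * ((n : ℝ) + 1 / 4) := by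
    refine monotone_nat_of_le_succ fun n => ?_
    rw [wallisSq_succ, mul_assoc]
    refine mul_le_mul_of_nonneg_left ?_ (wallisSq_pos n).le
    rw [div_pow, div_mul_eq_mul_div, le_div_iff₀ (by positivity)]
    push_cast
    nlinarith
  refine hmono.ge_of_tendsto ?_ n
  have := tendsto_mul_wallisSq.add (tendsto_wallisSq.mul_const (1 / 4))
  rw [zero_mul, add_zero] at this
  exact this.congr fun n => by ring

theorem wallisSq_lower {n : ℕ} (hn : 1 ≤ n) :
    1 / π ≤ wallisSq n * (n + 1 / 4 + 1 / (32 * n)) := by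
  have hanti : Antitone fun n : ℕ =>
      wallisSq (n + 1) * (((n + 1 : ℕ) : ℝ) + 1 / 4 + 1 / (32 * (n + 1 : ℕ))) := by
    refine antitone_nat_of_succ_le fun n => ?_
    rw [wallisSq_succ (n + 1), mul_assoc]
    refine mul_le_mul_of_nonneg_left ?_ (wallisSq_pos (n + 1)).le
    push_cast
    rw [← sub_nonneg]
    have : ((n : ℝ) + 1 + 1 / 4 + 1 / (32 * (n + 1))) - ((2 * (n + 1) + 1) / (2 * (n + 1) + 2)) ^ 2 *
        ((n : ℝ) + 1 + 1 + 1 / 4 + 1 / (32 * (n + 1 + 1))) =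
        (3 * (n + 1) + 4) / (32 * (n + 1) * (n + 2) * (2 * (n + 1) + 2) ^ 2) := by
      field_simp
      ring
    rw [this]
    positivity
  obtain ⟨m, rfl⟩ : ∃ m, n = m + 1 := ⟨n - 1, by omega⟩
  refine hanti.le_of_tendsto ?_ m
  have h₁ := tendsto_mul_wallisSq.add (tendsto_wallisSq.mul_const (1 / 4))
  have h₂ := h₁.add (tendsto_wallisSq.mul
    ((tendsto_inv_atTop_nhds_zero_nat (𝕜 := ℝ)).mul_const (1 / 32)))
  simp only [zero_mul, add_zero] at h₂
  refine (h₂.comp (tendsto_add_atTop_nat 1)).congr fun n => ?_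
  simp only [Function.comp]
  push_cast
  field_simp

theorem tendsto_mul_sqrt_wallisSq_sub :
    Tendsto (fun n : ℕ => n * (√(n * wallisSq n) - 1 / √π)) atTop (nhds (-1 / (8 * √π))) := by
  have h₁ : Tendsto (fun n : ℕ => n * (n * wallisSq n - 1 / π)) atTop (nhds (-1 / (4 * π))) := by
    have hu : Tendsto (fun n : ℕ => -(1 / 4) * (n * wallisSq n)) atTop (nhds (-1 / (4 * π))) := by
      have := tendsto_mul_wallisSq.const_mul (-(1 / 4))
      convert this using 2
      field_simp
    have hl := hu.sub (tendsto_wallisSq.mul_const (1 / 32))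
    rw [zero_mul, sub_zero] at hl
    refine tendsto_of_tendsto_of_tendsto_of_le_of_le' hl hu ?_ ?_
    · filter_upwards [eventually_ge_atTop 1] with n hn
      have hn' : (0 : ℝ) < n := by exact_mod_cast hn
      have h := mul_le_mul_of_nonneg_left (wallisSq_lower hn) hn'.le
      have : (n : ℝ) * (wallisSq n * (n + 1 / 4 + 1 / (32 * n))) =
          n * (n * wallisSq n) + 1 / 4 * (n * wallisSq n) + wallisSq n * (1 / 32) := by
        field_simp
      linarith
    · filter_upwards with n
      have h := mul_le_mul_of_nonneg_left (wallisSq_upper n) n.cast_nonneg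
      linarith
  have hπ : 0 < √π := Real.sqrt_pos.2 pi_pos
  have h₂ : Tendsto (fun n : ℕ => √(n * wallisSq n) + 1 / √π) atTop (nhds (2 / √π)) := by
    have := (tendsto_mul_wallisSq.sqrt).add_const (1 / √π)
    rw [Real.sqrt_div zero_le_one, Real.sqrt_one, ← add_div] at this
    norm_num at this ⊢
    exact this
  have h₃ := h₁.div h₂ (by positivity)
  have hlim : -1 / (4 * π) / (2 / √π) = -1 / (8 * √π) := by
    nth_rewrite 1 [← Real.sq_sqrt pi_pos.le]
    field_simp
    norm_num
  rw [hlim] at h₃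
  refine h₃.congr fun n => ?_
  have hs : √(n * wallisSq n) ^ 2 = n * wallisSq n :=
    Real.sq_sqrt (mul_nonneg n.cast_nonneg (wallisSq_pos n).le)
  have hs' : (1 / √π) ^ 2 = 1 / π := by rw [div_pow, Real.sq_sqrt pi_pos.le, one_pow]
  have hpos : 0 < √(n * wallisSq n) + 1 / √π := by positivity
  change (n : ℝ) * (n * wallisSq n - 1 / π) / (√(n * wallisSq n) + 1 / √π) = _
  rw [div_eq_iff hpos.ne']
  linear_combination -(n : ℝ) * hs + (n : ℝ) * hs'

theorem tendsto_sqrtCoeff_refined :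
    Tendsto (fun n : ℕ => n * (n * √n * sqrtCoeff n - -1 / (2 * √π))) atTop
      (nhds (-3 / (16 * √π))) := by
  have hπ : 0 < √π := Real.sqrt_pos.2 pi_pos
  have h₁ : Tendsto (fun n : ℕ => (n : ℝ) / (2 * n - 1)) atTop (nhds (1 / 2)) := by
    have := (tendsto_natCast_div_add_atTop (-(1 / 2) : ℝ)).mul_const (1 / 2 : ℝ)
    rw [one_mul] at this
    refine this.congr fun n => ?_
    rw [div_mul_div_comm]
    congr 1 <;> ring
  have h₂ := h₁.mul ((tendsto_mul_sqrt_wallisSq_sub.add_const (1 / (2 * √π))).neg)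
  have hlim : 1 / 2 * -(-1 / (8 * √π) + 1 / (2 * √π)) = -3 / (16 * √π) := by
    field_simp
    norm_num
  rw [hlim] at h₂
  refine h₂.congr' ?_
  filter_upwards [eventually_ge_atTop 1] with n hn
  obtain ⟨m, rfl⟩ : ∃ m, n = m + 1 := ⟨n - 1, by omega⟩
  have hm : (0 : ℝ) < 2 * ((m + 1 : ℕ) : ℝ) - 1 := by push_cast; linarith [m.cast_nonneg (α := ℝ)]
  rw [Real.sqrt_mul (by positivity), wallisSq, Real.sqrt_sq_eq_abs, abs_mul, abs_of_pos hm,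
    abs_of_neg (sqrtCoeff_succ_neg m), div_mul_eq_mul_div, div_eq_iff hm.ne']
  field_simp
  ring

theorem tendsto_sqrtCoeff :
    Tendsto (fun n : ℕ => n * √n * sqrtCoeff n) atTop (nhds (-1 / (2 * √π))) := by
  have := (tendsto_sqrtCoeff_refined.mul (tendsto_inv_atTop_nhds_zero_nat (𝕜 := ℝ))).add_const
    (-1 / (2 * √π))
  rw [mul_zero, zero_add] at this
  refine this.congr' ?_
  filter_upwards [eventually_ne_atTop 0] with n hn
  have : (n : ℝ) ≠ 0 := by exact_mod_cast hn
  field_simp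
  ring

theorem exists_abs_le_of_tendsto {u : ℕ → ℝ} {U : ℝ} (hu : Tendsto u atTop (nhds U)) :
    ∃ M, 0 ≤ M ∧ ∀ n, |u n| ≤ M := by
  obtain ⟨M, hM⟩ := (Metric.isBounded_range_of_tendsto u hu).exists_norm_le
  exact ⟨M, (norm_nonneg _).trans (hM (u 0) ⟨0, rfl⟩), fun n => hM (u n) ⟨n, rfl⟩⟩

theorem tendsto_sqrtCoeff_sub_succ :
    Tendsto (fun n : ℕ => ((n + 1 : ℕ) : ℝ) ^ 2 * √((n + 1 : ℕ) : ℝ) *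
      (sqrtCoeff n - sqrtCoeff (n + 1))) atTop (nhds (-3 / (4 * √π))) := by
  have hπ : 0 < √π := Real.sqrt_pos.2 pi_pos
  have h₁ : Tendsto (fun n : ℕ => ((n : ℝ) + 1) / (2 * n - 1)) atTop (nhds (1 / 2)) := by
    have h := (tendsto_natCast_div_add_atTop (-(1 / 2) : ℝ)).mul_const (1 / 2 : ℝ)
    have h' := (tendsto_natCast_div_add_atTop (1 : ℝ)).inv₀ one_ne_zero
    have := h'.mul h
    rw [one_mul, inv_one, one_mul] at this
    refine this.congr' ?_
    filter_upwards [eventually_ge_atTop 1] with n hn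
    have hn' : (1 : ℝ) ≤ n := by exact_mod_cast hn
    have : (n : ℝ) + -(1 / 2) ≠ 0 := by linarith
    have : 2 * (n : ℝ) - 1 ≠ 0 := by linarith
    field_simp
    ring
  have h₂ := (h₁.mul_const 3).mul (tendsto_sqrtCoeff.comp (tendsto_add_atTop_nat 1))
  have hlim : 1 / 2 * 3 * (-1 / (2 * √π)) = -3 / (4 * √π) := by
    field_simp
    norm_num
  rw [hlim] at h₂
  refine h₂.congr' ?_
  filter_upwards [eventually_ge_atTop 1] with n hn
  have hn' : (1 : ℝ) ≤ n := by exact_mod_cast hn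
  have : 2 * (n : ℝ) - 1 ≠ 0 := by linarith
  simp only [Function.comp]
  rw [sqrtCoeff_succ]
  push_cast
  rw [div_mul_eq_mul_div, div_mul_eq_mul_div, div_eq_iff this]
  field_simp
  ring

theorem tendsto_sqrtCoeff_sub (k : ℕ) :
    Tendsto (fun n : ℕ => (n : ℝ) ^ 2 * √n * (sqrtCoeff (n - k) - sqrtCoeff n)) atTop
      (nhds (k * (-3 / (4 * √π)))) := by
  induction k with
  | zero => simp
  | succ k ih =>
    have hstep : Tendsto (fun n : ℕ => (n : ℝ) ^ 2 * √n *
        (sqrtCoeff (n - (k + 1)) - sqrtCoeff (n - k))) atTop (nhds (-3 / (4 * √π))) := by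
      rw [← tendsto_add_atTop_iff_nat (k + 1)]
      have hratio : Tendsto (fun n : ℕ => ((n + (k + 1) : ℕ) : ℝ) / (n + 1 : ℕ)) atTop
          (nhds 1) := by
        have h := ((tendsto_inv_atTop_nhds_zero_nat (𝕜 := ℝ)).comp
          (tendsto_add_atTop_nat 1)).const_mul (k : ℝ) |>.const_add 1
        rw [mul_zero, add_zero] at h
        refine h.congr fun n => ?_
        simp only [Function.comp]
        push_cast
        field_simp
        ring
      have h := ((hratio.pow 2).mul hratio.sqrt).mul tendsto_sqrtCoeff_sub_succ
      rw [one_pow, Real.sqrt_one, one_mul, one_mul] at h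
      refine h.congr fun n => ?_
      have : √((n + 1 : ℕ) : ℝ) ≠ 0 := by positivity
      rw [Real.sqrt_div (by positivity), show n + (k + 1) - (k + 1) = n by omega,
        show n + (k + 1) - k = n + 1 by omega]
      field_simp
    have h := ih.add hstep
    convert h using 2
    · ring
    · push_cast
      ring

theorem abs_sqrtCoeff_sub_le {M : ℝ} (hM : ∀ n : ℕ, |((n + 1 : ℕ) : ℝ) ^ 2 * √((n + 1 : ℕ) : ℝ) *
      (sqrtCoeff n - sqrtCoeff (n + 1))| ≤ M) {n k : ℕ} (hk : k ≤ n) :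
    |(n : ℝ) ^ 2 * √n * (sqrtCoeff (n - k) - sqrtCoeff n)| ≤ k * ((k : ℝ) ^ 3 * M) := by
  have hM0 : 0 ≤ M := (abs_nonneg _).trans (hM 0)
  induction k with
  | zero => simp
  | succ k ih =>
    obtain ⟨m, rfl⟩ : ∃ m, n = m + 1 + k := ⟨n - (k + 1), by omega⟩
    have hstep : |((m + 1 + k : ℕ) : ℝ) ^ 2 * √((m + 1 + k : ℕ) : ℝ) *
        (sqrtCoeff m - sqrtCoeff (m + 1))| ≤ ((k + 1 : ℕ) : ℝ) ^ 3 * M := by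
      have hle : ((m + 1 + k : ℕ) : ℝ) ≤ (k + 1 : ℕ) * (m + 1 : ℕ) := by
        exact_mod_cast (by nlinarith : m + 1 + k ≤ (k + 1) * (m + 1))
      have hs : √((k + 1 : ℕ) : ℝ) ≤ (k + 1 : ℕ) := by
        rw [Real.sqrt_le_left (by positivity)]
        push_cast
        nlinarith [k.cast_nonneg (α := ℝ)]
      have hle' : √((m + 1 + k : ℕ) : ℝ) ≤ (k + 1 : ℕ) * √((m + 1 : ℕ) : ℝ) := by
        refine (Real.sqrt_le_sqrt hle).trans ?_
        rw [Real.sqrt_mul (by positivity)]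
        gcongr
      calc _ = ((m + 1 + k : ℕ) : ℝ) ^ 2 * √((m + 1 + k : ℕ) : ℝ) *
            |sqrtCoeff m - sqrtCoeff (m + 1)| := by
            rw [abs_mul, abs_of_nonneg (by positivity)]
        _ ≤ ((k + 1 : ℕ) * (m + 1 : ℕ) : ℝ) ^ 2 * ((k + 1 : ℕ) * √((m + 1 : ℕ) : ℝ)) *
            |sqrtCoeff m - sqrtCoeff (m + 1)| := by gcongr
        _ = ((k + 1 : ℕ) : ℝ) ^ 3 * |((m + 1 : ℕ) : ℝ) ^ 2 * √((m + 1 : ℕ) : ℝ) *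
            (sqrtCoeff m - sqrtCoeff (m + 1))| := by
            rw [abs_mul, abs_of_nonneg (by positivity : (0 : ℝ) ≤
              ((m + 1 : ℕ) : ℝ) ^ 2 * √((m + 1 : ℕ) : ℝ))]
            ring
        _ ≤ _ := by gcongr; exact hM m
    have h := ih (by omega)
    rw [show m + 1 + k - (k + 1) = m by omega]
    rw [show m + 1 + k - k = m + 1 by omega] at h
    have hk3 : (k : ℝ) * ((k : ℝ) ^ 3 * M) ≤ k * (((k + 1 : ℕ) : ℝ) ^ 3 * M) := by
      gcongr
      omega
    calc _ = |((m + 1 + k : ℕ) : ℝ) ^ 2 * √((m + 1 + k : ℕ) : ℝ) *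
          (sqrtCoeff m - sqrtCoeff (m + 1)) + ((m + 1 + k : ℕ) : ℝ) ^ 2 *
          √((m + 1 + k : ℕ) : ℝ) * (sqrtCoeff (m + 1) - sqrtCoeff (m + 1 + k))| := by
          congr 1; ring
      _ ≤ _ := abs_add_le _ _
      _ ≤ ((k + 1 : ℕ) : ℝ) ^ 3 * M + k * (((k + 1 : ℕ) : ℝ) ^ 3 * M) :=
          add_le_add hstep (h.trans hk3)
      _ = _ := by push_cast; ring

theorem tendsto_conv_sqrtCoeff_sub {d : ℕ → ℝ} {q : ℝ} (hq0 : 0 ≤ q) (hq1 : q < 1)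
    (hd : ∀ k, |d k| ≤ q ^ k) :
    Tendsto (fun n : ℕ => (n : ℝ) ^ 2 * √n *
      (∑ k ∈ Finset.range (n + 1), sqrtCoeff (n - k) * d k - sqrtCoeff n * ∑' k, d k)) atTop
      (nhds (-3 / (4 * √π) * ∑' k, k * d k)) := by
  obtain ⟨M, hM0, hM⟩ := exists_abs_le_of_tendsto tendsto_sqrtCoeff_sub_succ
  have hdsum : Summable d :=
    Summable.of_norm_bounded (summable_geometric_of_lt_one hq0 hq1) hd
  let T : ℕ → ℕ → ℝ := fun n k => (n : ℝ) ^ 2 * √n *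
    ((if k ∈ Finset.range (n + 1) then sqrtCoeff (n - k) * d k else 0) - sqrtCoeff n * d k)
  have hT (n : ℕ) : ∑' k, T n k = (n : ℝ) ^ 2 * √n *
      (∑ k ∈ Finset.range (n + 1), sqrtCoeff (n - k) * d k - sqrtCoeff n * ∑' k, d k) := by
    have h₁ : HasSum (fun k => if k ∈ Finset.range (n + 1) then sqrtCoeff (n - k) * d k else 0)
        (∑ k ∈ Finset.range (n + 1), sqrtCoeff (n - k) * d k) := by
      rw [← Finset.sum_congr rfl fun k hk =>
        if_pos (c := k ∈ Finset.range (n + 1)) (t := sqrtCoeff (n - k) * d k) (e := 0) hk]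
      exact hasSum_sum_of_ne_finset_zero fun k hk => if_neg hk
    exact ((h₁.sub (hdsum.hasSum.mul_left _)).mul_left _).tsum_eq
  have hq : ‖q‖ < 1 := by rwa [Real.norm_of_nonneg hq0]
  have hgeom : Summable fun k : ℕ => (k : ℝ) ^ 4 * q ^ k :=
    summable_pow_mul_geometric_of_norm_lt_one 4 hq
  have hbound := hgeom.mul_left (M + 1)
  suffices h : Tendsto (fun n => ∑' k, T n k) atTop
      (nhds (∑' k : ℕ, -3 / (4 * √π) * (k * d k))) by
    rw [tsum_mul_left] at h
    exact h.congr hT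
  refine tendsto_tsum_of_dominated_convergence hbound (fun k => ?_)
    (Eventually.of_forall fun n k => ?_)
  · have h := (tendsto_sqrtCoeff_sub k).mul_const (d k)
    have hlim : (k : ℝ) * (-3 / (4 * √π)) * d k = -3 / (4 * √π) * (k * d k) := by ring
    rw [hlim] at h
    refine h.congr' ?_
    filter_upwards [eventually_ge_atTop k] with n hn
    simp only [T, if_pos (Finset.mem_range.2 (Nat.lt_succ_of_le hn))]
    ring
  · have hqk : 0 ≤ q ^ k := pow_nonneg hq0 k
    rw [Real.norm_eq_abs]
    by_cases hkn : k ≤ n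
    · simp only [T, if_pos (Finset.mem_range.2 (Nat.lt_succ_of_le hkn))]
      calc _ = |(n : ℝ) ^ 2 * √n * (sqrtCoeff (n - k) - sqrtCoeff n)| * |d k| := by
            rw [← abs_mul]; congr 1; ring
        _ ≤ k * ((k : ℝ) ^ 3 * M) * q ^ k :=
            mul_le_mul (abs_sqrtCoeff_sub_le hM hkn) (hd k) (abs_nonneg _) (by positivity)
        _ ≤ (M + 1) * ((k : ℝ) ^ 4 * q ^ k) := by
            have : 0 ≤ (k : ℝ) ^ 4 * q ^ k := by positivity
            nlinarith
    · simp only [T, if_neg (fun h => hkn (Nat.le_of_lt_succ (Finset.mem_range.1 h)))]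
      have hkn' : (n : ℝ) ≤ k := by exact_mod_cast (not_le.1 hkn).le
      have hk1 : (1 : ℝ) ≤ k := by exact_mod_cast (by omega : 1 ≤ k)
      have hs : √(n : ℝ) ≤ k := by
        rw [Real.sqrt_le_left (by positivity)]
        nlinarith
      calc _ = (n : ℝ) ^ 2 * √n * (|sqrtCoeff n| * |d k|) := by
            rw [zero_sub, abs_mul, abs_neg, abs_mul (sqrtCoeff n),
              abs_of_nonneg (by positivity : (0 : ℝ) ≤ (n : ℝ) ^ 2 * √n)]
        _ ≤ (k : ℝ) ^ 2 * k * (1 * q ^ k) := by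
            gcongr
            · exact abs_sqrtCoeff_le_one n
            · exact hd k
        _ ≤ (k : ℝ) ^ 2 * k * (1 * q ^ k) * (k * (M + 1)) := by
            refine le_mul_of_one_le_right (by positivity) ?_
            nlinarith
        _ = _ := by ring

theorem sum_antidiagonal_sqrtCoeff (q : ℝ) (n : ℕ) :
    ∑ p ∈ antidiagonal n, sqrtCoeff p.1 * q ^ p.1 * (sqrtCoeff p.2 * q ^ p.2) =
      q ^ n * PowerSeries.coeff n (1 - PowerSeries.X : PowerSeries ℝ) := by
  rw [← mk_sqrtCoeff_sq, sq, PowerSeries.coeff_mul, Finset.mul_sum]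
  refine Finset.sum_congr rfl fun p hp => ?_
  rw [PowerSeries.coeff_mk, PowerSeries.coeff_mk, ← mem_antidiagonal.1 hp]
  ring

theorem abs_sqrtCoeff_mul_pow_le {q : ℝ} (hq0 : 0 ≤ q) (k : ℕ) :
    |sqrtCoeff k * q ^ k| ≤ q ^ k := by
  rw [abs_mul, abs_of_nonneg (pow_nonneg hq0 k)]
  exact mul_le_of_le_one_left (pow_nonneg hq0 k) (abs_sqrtCoeff_le_one k)

theorem summable_norm_sqrtCoeff_mul_pow {q : ℝ} (hq0 : 0 ≤ q) (hq1 : q < 1) :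
    Summable fun k => ‖sqrtCoeff k * q ^ k‖ :=
  Summable.of_nonneg_of_le (fun _ => norm_nonneg _) (abs_sqrtCoeff_mul_pow_le hq0)
    (summable_geometric_of_lt_one hq0 hq1)

theorem summable_norm_mul_sqrtCoeff_mul_pow {q : ℝ} (hq0 : 0 ≤ q) (hq1 : q < 1) :
    Summable fun k : ℕ => ‖(k : ℝ) * (sqrtCoeff k * q ^ k)‖ := by
  have hq : ‖q‖ < 1 := by rwa [Real.norm_of_nonneg hq0]
  have hgeom : Summable fun k : ℕ => (k : ℝ) ^ 1 * q ^ k :=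
    summable_pow_mul_geometric_of_norm_lt_one 1 hq
  refine Summable.of_nonneg_of_le (fun _ => norm_nonneg _) (fun k => ?_) hgeom
  rw [norm_mul, Real.norm_natCast, pow_one]
  exact mul_le_mul_of_nonneg_left (abs_sqrtCoeff_mul_pow_le hq0 k) k.cast_nonneg

theorem tsum_sqrtCoeff_mul_self {q : ℝ} (hq0 : 0 ≤ q) (hq1 : q < 1) :
    (∑' k, sqrtCoeff k * q ^ k) * ∑' k, sqrtCoeff k * q ^ k = 1 - q := by
  have hs := summable_norm_sqrtCoeff_mul_pow hq0 hq1
  rw [tsum_mul_tsum_eq_tsum_sum_antidiagonal_of_summable_norm hs hs]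
  simp_rw [sum_antidiagonal_sqrtCoeff]
  rw [tsum_eq_sum (s := Finset.range 2)]
  · simp [Finset.sum_range_succ, PowerSeries.coeff_one, PowerSeries.coeff_X, sub_eq_add_neg]
  · intro n hn
    have : 2 ≤ n := not_lt.1 (mt Finset.mem_range.2 hn)
    simp [PowerSeries.coeff_one, PowerSeries.coeff_X, show n ≠ 0 by omega, show n ≠ 1 by omega]

theorem tsum_sqrtCoeff_mul_tsum {q : ℝ} (hq0 : 0 ≤ q) (hq1 : q < 1) :
    (∑' k, sqrtCoeff k * q ^ k) * ∑' k : ℕ, k * (sqrtCoeff k * q ^ k) = -(q / 2) := by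
  rw [tsum_mul_tsum_eq_tsum_sum_antidiagonal_of_summable_norm
    (summable_norm_sqrtCoeff_mul_pow hq0 hq1) (summable_norm_mul_sqrtCoeff_mul_pow hq0 hq1)]
  have hsum (n : ℕ) : ∑ p ∈ antidiagonal n,
      sqrtCoeff p.1 * q ^ p.1 * (p.2 * (sqrtCoeff p.2 * q ^ p.2)) =
      n / 2 * (q ^ n * PowerSeries.coeff n (1 - PowerSeries.X : PowerSeries ℝ)) := by
    have hswap := Finset.Nat.sum_antidiagonal_swap (n := n) (f := fun p : ℕ × ℕ =>
      sqrtCoeff p.1 * q ^ p.1 * (p.2 * (sqrtCoeff p.2 * q ^ p.2)))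
    have hadd : (n : ℝ) * ∑ p ∈ antidiagonal n,
        sqrtCoeff p.1 * q ^ p.1 * (sqrtCoeff p.2 * q ^ p.2) =
        (∑ p ∈ antidiagonal n, sqrtCoeff p.1 * q ^ p.1 * (p.2 * (sqrtCoeff p.2 * q ^ p.2))) +
        ∑ p ∈ antidiagonal n, sqrtCoeff p.swap.1 * q ^ p.swap.1 *
          (p.swap.2 * (sqrtCoeff p.swap.2 * q ^ p.swap.2)) := by
      rw [Finset.mul_sum, ← Finset.sum_add_distrib]
      refine Finset.sum_congr rfl fun p hp => ?_
      rw [← mem_antidiagonal.1 hp, Prod.fst_swap, Prod.snd_swap]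
      push_cast
      ring
    rw [sum_antidiagonal_sqrtCoeff] at hadd
    linarith
  simp_rw [hsum]
  rw [tsum_eq_sum (s := Finset.range 2)]
  · simp [Finset.sum_range_succ, PowerSeries.coeff_one, PowerSeries.coeff_X]
    ring
  · intro n hn
    have : 2 ≤ n := not_lt.1 (mt Finset.mem_range.2 hn)
    simp [PowerSeries.coeff_one, PowerSeries.coeff_X, show n ≠ 0 by omega, show n ≠ 1 by omega]

theorem tsum_sqrtCoeff_pos {q : ℝ} (hq0 : 0 < q) (hq1 : q < 1) :
    0 < ∑' k, sqrtCoeff k * q ^ k := by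
  have hle : ∑' k : ℕ, k * (sqrtCoeff k * q ^ k) ≤ 0 := by
    refine tsum_nonpos fun k => ?_
    cases k with
    | zero => simp
    | succ k =>
      exact mul_nonpos_of_nonneg_of_nonpos (Nat.cast_nonneg _)
        (mul_nonpos_of_nonpos_of_nonneg (sqrtCoeff_succ_neg k).le (by positivity))
  by_contra! h
  have := tsum_sqrtCoeff_mul_tsum hq0.le hq1
  have := mul_nonneg_of_nonpos_of_nonpos h hle
  linarith

theorem tendsto_conv_sqrtCoeff_refined {q : ℝ} (hq0 : 0 ≤ q) (hq1 : q < 1) :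
    Tendsto (fun n : ℕ => (n : ℝ) ^ 2 * √n *
      ∑ k ∈ Finset.range (n + 1), sqrtCoeff (n - k) * (sqrtCoeff k * q ^ k) -
        (∑' k, sqrtCoeff k * q ^ k) * (-1 / (2 * √π)) * n) atTop
      (nhds (-3 / (4 * √π) * (∑' k : ℕ, k * (sqrtCoeff k * q ^ k)) +
        (∑' k, sqrtCoeff k * q ^ k) * (-3 / (16 * √π)))) := by
  refine ((tendsto_conv_sqrtCoeff_sub hq0 hq1 (abs_sqrtCoeff_mul_pow_le hq0)).add
    (tendsto_sqrtCoeff_refined.const_mul (∑' k, sqrtCoeff k * q ^ k))).congr fun n => ?_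
  ring
/-- Refined asymptotics of `sₙ`:
`sₙ = ((3-2√2)^{-n+1/2}/√π) (2^{-3/4} n^{-3/2} + ((12√2-9)/(32·2^{1/4})) n^{-5/2} + o(n^{-5/2}))`. -/
theorem sep_card_asymp_refined :
    Tendsto (fun n : ℕ => (n : ℝ) ^ ((5 : ℝ) / 2) *
        (Real.sqrt π * (3 - 2 * Real.sqrt 2) ^ ((n : ℝ) - 1 / 2) * ((SEP n).card : ℝ) -
          (2 : ℝ) ^ (-(3 : ℝ) / 4) * (n : ℝ) ^ (-(3 : ℝ) / 2))) atTop
      (nhds ((12 * Real.sqrt 2 - 9) / (32 * (2 : ℝ) ^ ((1 : ℝ) / 4)))) := by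
  set t : ℝ := (2 : ℝ) ^ ((1 : ℝ) / 4) with ht
  have ht0 : 0 < t := Real.rpow_pos_of_pos two_pos _
  have ht4 : t ^ 4 = 2 := by
    rw [ht, ← Real.rpow_natCast, ← Real.rpow_mul zero_le_two]
    norm_num
  have hsqrt : √2 = t ^ 2 :=
    (Real.sqrt_eq_iff_mul_self_eq zero_le_two (by positivity)).2 (by rw [← ht4]; ring)
  have ht34 : (2 : ℝ) ^ (-(3 : ℝ) / 4) = t / 2 := by
    rw [show -(3 : ℝ) / 4 = 1 / 4 - 1 by norm_num, Real.rpow_sub_one two_ne_zero]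
  have ht1 : 1 < t ^ 2 := by nlinarith [sq_nonneg (t ^ 2 - 1), sq_nonneg t]
  have ht2 : t ^ 2 < 2 := by nlinarith
  have hr : 3 - 2 * √2 = (t ^ 2 - 1) ^ 2 := by
    rw [hsqrt]
    linear_combination -ht4
  have hw0 : 0 < t ^ 2 - 1 := sub_pos.2 ht1
  have hq1 : ((t ^ 2 - 1) ^ 2) ^ 2 < 1 := by
    rw [← pow_mul]
    exact pow_lt_one₀ hw0.le (by linarith) (by norm_num)
  have hq0 : 0 < ((t ^ 2 - 1) ^ 2) ^ 2 := by positivity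
  have hlim := tendsto_conv_sqrtCoeff_refined hq0.le hq1
  have hD0 := tsum_sqrtCoeff_pos hq0 hq1
  have hDD := tsum_sqrtCoeff_mul_self hq0.le hq1
  have hDE := tsum_sqrtCoeff_mul_tsum hq0.le hq1
  set D := ∑' k, sqrtCoeff k * (((t ^ 2 - 1) ^ 2) ^ 2) ^ k
  set E := ∑' k : ℕ, k * (sqrtCoeff k * (((t ^ 2 - 1) ^ 2) ^ 2) ^ k)
  have hD : D = 2 * t * (t ^ 2 - 1) := by
    rw [← Real.sqrt_mul_self hD0.le, ← Real.sqrt_sq (by positivity : 0 ≤ 2 * t * (t ^ 2 - 1)), hDD]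
    congr 1
    linear_combination -(t ^ 4) * ht4
  have hE : E = -(t ^ 2 - 1) ^ 3 / (4 * t) := by
    rw [eq_div_iff (by positivity)]
    refine mul_left_cancel₀ hw0.ne' ?_
    rw [hD] at hDE
    linear_combination 2 * hDE
  have hπ : 0 < √π := Real.sqrt_pos.2 pi_pos
  have hconst : -(√π / 2) * (t ^ 2 + 1) * (-3 / (4 * √π) * E + D * (-3 / (16 * √π))) =
      (12 * √2 - 9) / (32 * t) := by
    rw [hE, hD, hsqrt]
    field_simp
    linear_combination -1536 * (t ^ 4 - 4 * t ^ 2 + 2) * ht4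
  rw [← hconst]
  refine (hlim.const_mul (-(√π / 2) * (t ^ 2 + 1))).congr' ?_
  filter_upwards [eventually_ge_atTop 2] with n hn
  have hn0 : (0 : ℝ) < n := by exact_mod_cast (by omega : 0 < n)
  have hcard := card_SEP_eq_sum hn (r := (t ^ 2 - 1) ^ 2) (s := (t ^ 2 + 1) ^ 2)
    (by linear_combination (t ^ 4) * ht4) (by linear_combination 2 * ht4)
  have hpow : (n : ℝ) ^ ((5 : ℝ) / 2) = n ^ 2 * √n := by
    rw [show (5 : ℝ) / 2 = (2 : ℕ) + 1 / 2 by norm_num, Real.rpow_add hn0, Real.rpow_natCast,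
      Real.sqrt_eq_rpow]
  have hpow' : (n : ℝ) ^ (-(3 : ℝ) / 2) * (n ^ 2 * √n) = n := by
    rw [← hpow, ← Real.rpow_add hn0]
    norm_num
  have hrpow : (3 - 2 * √2) ^ ((n : ℝ) - 1 / 2) = ((t ^ 2 - 1) ^ 2) ^ n * (t ^ 2 + 1) := by
    rw [hr, Real.rpow_sub (by positivity), Real.rpow_natCast, ← Real.sqrt_eq_rpow,
      Real.sqrt_sq hw0.le, div_eq_iff hw0.ne', mul_assoc]
    linear_combination -((t ^ 2 - 1) ^ 2) ^ n * ht4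
  rw [hpow, hrpow, ht34, mul_sub, hD]
  have hK : √π * (-1 / (2 * √π)) = -1 / 2 := by field_simp
  linear_combination -((n : ℝ) ^ 2 * √n * √π * (t ^ 2 + 1)) * hcard + t / 2 * hpow' +
    (t ^ 4 - 1) * t * n * hK - t * n / 2 * ht4
end

section
/- Let f(t) = (t² − 6t + 1)^{−1/2}, which is real analytic on |t| < 3 − 2√2, and let a_n = f^{(n)}(0)/n! be its Taylor coefficients at 0, so that f(t) = ∑_{n=0}^∞ a_n t^n for |t| < 3 − 2√2. Then a_n = ((3 − 2√2)^{−n−1/2}/√π)·(2^{−5/4}·n^{−1/2} + ((3 − 4√2)/(32·2^{3/4}))·n^{−3/2} + o(n^{−3/2})) as n→∞; in particular a_n ~ (1/(2^{5/4}√π))·n^{−1/2}·(3 − 2√2)^{−n−1/2}. -/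
open Finset Filter Real
open scoped Classical

/-- The coefficients of the power series of `(1 - x) ^ (-1 / 2)`. -/
noncomputable def invSqrtCoeff (n : ℕ) : ℝ := (Nat.centralBinom n : ℝ) / 4 ^ n

lemma invSqrtCoeff_pos (n : ℕ) : 0 < invSqrtCoeff n := by
  have := Nat.centralBinom_pos n
  unfold invSqrtCoeff
  positivity

lemma invSqrtCoeff_zero : invSqrtCoeff 0 = 1 := by simp [invSqrtCoeff]

lemma invSqrtCoeff_le_one (n : ℕ) : invSqrtCoeff n ≤ 1 := by
  rw [invSqrtCoeff, div_le_one (by positivity)]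
  exact_mod_cast Nat.centralBinom_le_four_pow n

lemma invSqrtCoeff_succ (n : ℕ) :
    invSqrtCoeff (n + 1) = invSqrtCoeff n * ((2 * n + 1) / (2 * n + 2)) := by
  have h : ((n : ℝ) + 1) * Nat.centralBinom (n + 1) = 2 * (2 * n + 1) * Nat.centralBinom n := by
    exact_mod_cast Nat.succ_mul_centralBinom_succ n
  simp only [invSqrtCoeff, pow_succ]
  field_simp
  linarith

lemma iteratedDeriv_one_sub_mul_rpow (c : ℝ) (n : ℕ) {t : ℝ} (ht : c * t < 1) :
    iteratedDeriv n (fun t : ℝ => (1 - c * t) ^ (-(1 : ℝ) / 2)) t =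
      n.factorial * invSqrtCoeff n * c ^ n * (1 - c * t) ^ (-(1 : ℝ) / 2 - n) := by
  induction n generalizing t with
  | zero => simp [invSqrtCoeff_zero]
  | succ n ih =>
    have hev : ∀ᶠ s in nhds t, c * s < 1 :=
      (continuous_const.mul continuous_id).continuousAt.eventually_lt continuousAt_const ht
    have hd : HasDerivAt (fun s : ℝ => 1 - c * s) (-c) t := by
      simpa using ((hasDerivAt_id t).const_mul c).const_sub 1
    have hr := (hd.rpow_const (p := -(1 : ℝ) / 2 - n) (Or.inl (by linarith))).const_mul
      (n.factorial * invSqrtCoeff n * c ^ n)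
    rw [iteratedDeriv_succ, Filter.EventuallyEq.deriv_eq (hev.mono fun s hs => ih hs), hr.deriv,
      invSqrtCoeff_succ, Nat.factorial_succ]
    push_cast
    rw [show -(1 : ℝ) / 2 - n - 1 = -1 / 2 - (n + 1) by ring]
    field_simp
    ring

lemma hasSum_invSqrtCoeff {q : ℝ} (hq0 : 0 ≤ q) (hq : q < 1) :
    HasSum (fun n => invSqrtCoeff n * q ^ n) ((1 - q) ^ (-(1 : ℝ) / 2)) := by
  have h := Real.one_div_one_sub_rpow_hasFPowerSeriesOnBall_zero (1 / 2)
  have hmem : q ∈ Metric.eball (0 : ℝ) 1 := by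
    rw [← ENNReal.ofReal_one, Metric.eball_ofReal]
    simpa [abs_of_nonneg hq0] using hq
  have hs := h.hasSum_iteratedFDeriv hmem
  have hfun : Set.EqOn (fun x : ℝ => 1 / (1 - x) ^ (1 / 2 : ℝ))
      (fun t : ℝ => (1 - 1 * t) ^ (-(1 : ℝ) / 2)) (Set.Iio 1) := by
    intro x hx
    have : (0 : ℝ) ≤ 1 - x := by linarith [Set.mem_Iio.1 hx]
    simp [neg_div, Real.rpow_neg this]
  have hev := hfun.eventuallyEq_of_mem (Iio_mem_nhds (zero_lt_one' ℝ))
  have hfq := hfun (Set.mem_Iio.2 hq)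
  simp only [one_mul] at hfq
  rw [zero_add, hfq] at hs
  have hcoeff : (fun n => invSqrtCoeff n * q ^ n) = fun n : ℕ => (n.factorial : ℝ)⁻¹ •
      iteratedFDeriv ℝ n (fun x : ℝ => 1 / (1 - x) ^ (1 / 2 : ℝ)) 0 fun _ => q := by
    ext n
    have h1 := iteratedDeriv_one_sub_mul_rpow 1 n (t := 0) (by simp)
    rw [← hev.iteratedDeriv_eq n] at h1
    rw [iteratedFDeriv_apply_eq_iteratedDeriv_mul_prod, h1]
    simp
    field_simp
  rwa [hcoeff]

lemma hasSum_nat_mul_invSqrtCoeff {q : ℝ} (hq0 : 0 ≤ q) (hq : q < 1) :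
    HasSum (fun n : ℕ => n * invSqrtCoeff n * q ^ n)
      (q / (2 * (1 - q)) * (1 - q) ^ (-(1 : ℝ) / 2)) := by
  have hG := hasSum_invSqrtCoeff hq0 hq
  have hsum : Summable (fun n : ℕ => n * invSqrtCoeff n * q ^ n) := by
    have h : Summable (fun n : ℕ => (n : ℝ) ^ 1 * q ^ n) :=
      summable_pow_mul_geometric_of_norm_lt_one 1 (by simpa [abs_of_nonneg hq0] using hq)
    refine Summable.of_nonneg_of_le (fun n => ?_) (fun n => ?_) h
    · have := (invSqrtCoeff_pos n).le
      positivity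
    · rw [pow_one]
      gcongr
      exact mul_le_of_le_one_right n.cast_nonneg (invSqrtCoeff_le_one n)
  obtain ⟨D, hD⟩ := hsum
  have h1 := (hasSum_nat_add_iff' 1).2 hD
  have h2 : HasSum (fun n : ℕ => q * (n * invSqrtCoeff n * q ^ n) +
      q / 2 * (invSqrtCoeff n * q ^ n)) _ := (hD.mul_left q).add (hG.mul_left (q / 2))
  have h3 : (fun n : ℕ => ((n + 1 : ℕ) : ℝ) * invSqrtCoeff (n + 1) * q ^ (n + 1)) =
      fun n : ℕ => q * (n * invSqrtCoeff n * q ^ n) + q / 2 * (invSqrtCoeff n * q ^ n) := by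
    ext n
    rw [invSqrtCoeff_succ]
    push_cast
    field_simp
    ring
  rw [h3] at h1
  have h4 := h1.unique h2
  simp only [range_one, sum_singleton, Nat.cast_zero, zero_mul, sub_zero] at h4
  have h5 : 1 - q ≠ 0 := by linarith
  convert hD using 1
  field_simp
  linarith

lemma invSqrtCoeff_le_two_pow_mul (m k : ℕ) :
    invSqrtCoeff m ≤ 2 ^ k * invSqrtCoeff (m + k) := by
  induction k with
  | zero => simp
  | succ k ih =>
    rw [← add_assoc, invSqrtCoeff_succ]
    refine ih.trans ?_
    have h := invSqrtCoeff_pos (m + k)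
    have h1 : (1 : ℝ) / 2 ≤ (2 * (m + k : ℕ) + 1) / (2 * (m + k : ℕ) + 2) := by
      rw [div_le_div_iff₀ (by positivity) (by positivity)]
      have : (0 : ℝ) ≤ (m + k : ℕ) := by positivity
      linarith
    calc 2 ^ k * invSqrtCoeff (m + k) = 2 ^ (k + 1) * (invSqrtCoeff (m + k) * (1 / 2)) := by ring
      _ ≤ _ := by gcongr

lemma invSqrtCoeff_antitone : Antitone invSqrtCoeff := by
  refine antitone_nat_of_succ_le fun n => ?_
  rw [invSqrtCoeff_succ]
  refine mul_le_of_le_one_right (invSqrtCoeff_pos n).le ?_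
  rw [div_le_one (by positivity)]
  linarith

lemma nat_mul_invSqrtCoeff_sub_le (m k : ℕ) :
    ((m + k : ℕ) : ℝ) * (invSqrtCoeff m - invSqrtCoeff (m + k)) ≤
      4 ^ k * invSqrtCoeff (m + k) := by
  induction k generalizing m with
  | zero => simp [(invSqrtCoeff_pos m).le]
  | succ k ih =>
    have h := ih (m + 1)
    rw [show m + 1 + k = m + (k + 1) by ring] at h
    have h1 := invSqrtCoeff_le_two_pow_mul (m + 1) k
    rw [show m + 1 + k = m + (k + 1) by ring] at h1
    have h2 := invSqrtCoeff_succ m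
    have h3 : invSqrtCoeff m - invSqrtCoeff (m + 1) = invSqrtCoeff (m + 1) / (2 * m + 1) := by
      rw [h2]; field_simp; ring
    have hk : ((k : ℝ) + 1) ≤ 2 ^ k := by
      exact_mod_cast Nat.lt_two_pow_self (n := k)
    have hb := invSqrtCoeff_pos (m + (k + 1))
    have h4 : ((m + (k + 1) : ℕ) : ℝ) / (2 * m + 1) ≤ k + 1 := by
      rw [div_le_iff₀ (by positivity)]
      push_cast
      nlinarith [(by positivity : (0 : ℝ) ≤ m * k), (m.cast_nonneg : (0 : ℝ) ≤ m)]
    have h5 : ((m + (k + 1) : ℕ) : ℝ) * (invSqrtCoeff m - invSqrtCoeff (m + 1)) ≤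
        4 ^ k * invSqrtCoeff (m + (k + 1)) := by
      calc _ = ((m + (k + 1) : ℕ) : ℝ) / (2 * m + 1) * invSqrtCoeff (m + 1) := by rw [h3]; ring
        _ ≤ 2 ^ k * (2 ^ k * invSqrtCoeff (m + (k + 1))) := by
          have := (invSqrtCoeff_pos (m + 1)).le
          gcongr
          exact h4.trans hk
        _ = _ := by rw [← mul_assoc, ← mul_pow]; norm_num
    have h6 : (0 : ℝ) ≤ 4 ^ k * invSqrtCoeff (m + (k + 1)) := by positivity
    rw [pow_succ]
    linarith

lemma tendsto_of_tendsto_nat_mul_sub {x : ℕ → ℝ} {L c : ℝ}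
    (h : Tendsto (fun n : ℕ => (n : ℝ) * (x n - L)) atTop (nhds c)) :
    Tendsto x atTop (nhds L) := by
  have h1 := (h.mul tendsto_inv_atTop_nhds_zero_nat).add_const L
  rw [mul_zero, zero_add] at h1
  refine h1.congr' ?_
  filter_upwards [eventually_ne_atTop 0] with n hn
  field_simp
  ring

lemma tendsto_const_div_two_mul_add_one (c : ℝ) :
    Tendsto (fun n : ℕ => c / (2 * (n : ℝ) + 1)) atTop (nhds 0) :=
  tendsto_const_nhds.div_atTop (tendsto_atTop_add_const_right _ _
    (tendsto_natCast_atTop_atTop.const_mul_atTop two_pos))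

lemma tendsto_nat_mul_invSqrtCoeff_ratio (k : ℕ) :
    Tendsto (fun n : ℕ => (n : ℝ) * (invSqrtCoeff (n - k) / invSqrtCoeff n - 1)) atTop
      (nhds ((k : ℝ) / 2)) := by
  induction k with
  | zero =>
    simp [div_self (invSqrtCoeff_pos _).ne']
  | succ k ih =>
    have hr := tendsto_of_tendsto_nat_mul_sub ih
    rw [← tendsto_add_atTop_iff_nat (k + 1)] at ih hr ⊢
    have h := ih.add (hr.mul ((tendsto_const_div_two_mul_add_one (k + 1 / 2)).const_add (1 / 2)))
    rw [add_zero, one_mul, ← add_div, ← Nat.cast_succ] at h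
    refine h.congr fun m => ?_
    have hb := (invSqrtCoeff_pos (m + (k + 1))).ne'
    rw [Nat.add_sub_cancel, show m + (k + 1) - k = m + 1 by omega, invSqrtCoeff_succ m]
    push_cast
    field_simp
    ring

/-- The Cauchy product of the series of `(1 - x) ^ (-1 / 2)` and `(1 - q * x) ^ (-1 / 2)`. -/
noncomputable def invSqrtConv (q : ℝ) (n : ℕ) : ℝ :=
  ∑ k ∈ range (n + 1), invSqrtCoeff (n - k) * (invSqrtCoeff k * q ^ k)

lemma tendsto_nat_mul_invSqrtConv_ratio {q : ℝ} (hq0 : 0 ≤ q) (hq : 4 * q < 1) :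
    Tendsto (fun n : ℕ => (n : ℝ) *
        (invSqrtConv q n / invSqrtCoeff n - (1 - q) ^ (-(1 : ℝ) / 2))) atTop
      (nhds (q / (4 * (1 - q)) * (1 - q) ^ (-(1 : ℝ) / 2))) := by
  have hq1 : q < 1 := by linarith
  have hG := hasSum_invSqrtCoeff hq0 hq1
  have hD := (hasSum_nat_mul_invSqrtCoeff hq0 hq1).mul_left (1 / 2)
  let F : ℕ → ℕ → ℝ := fun n k =>
    (n : ℝ) * ((if k ≤ n then invSqrtCoeff (n - k) / invSqrtCoeff n else 0) - 1) *
      (invSqrtCoeff k * q ^ k)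
  have hlim : Tendsto (∑' k, F · k) atTop
      (nhds (∑' k : ℕ, 1 / 2 * (k * invSqrtCoeff k * q ^ k))) := by
    refine tendsto_tsum_of_dominated_convergence (bound := fun k => (4 * q) ^ k)
      (summable_geometric_of_lt_one (by positivity) hq) (fun k => ?_)
      (Eventually.of_forall fun n k => ?_)
    · have h := (tendsto_nat_mul_invSqrtCoeff_ratio k).mul_const (invSqrtCoeff k * q ^ k)
      rw [show 1 / 2 * (k * invSqrtCoeff k * q ^ k) = (k : ℝ) / 2 * (invSqrtCoeff k * q ^ k) by
        ring]
      refine h.congr' ?_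
      filter_upwards [eventually_ge_atTop k] with n hn
      simp [F, hn]
    · have hb := invSqrtCoeff_pos k
      have hle : |(n : ℝ) * ((if k ≤ n then invSqrtCoeff (n - k) / invSqrtCoeff n else 0) - 1)| ≤
          4 ^ k := by
        split_ifs with hk
        · obtain ⟨m, rfl⟩ := Nat.exists_eq_add_of_le' hk
          have hp := invSqrtCoeff_pos (m + k)
          have h1 := invSqrtCoeff_antitone (Nat.le_add_right m k)
          have h2 := nat_mul_invSqrtCoeff_sub_le m k
          rw [Nat.add_sub_cancel, div_sub_one hp.ne', ← mul_div_assoc, abs_of_nonneg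
            (div_nonneg (mul_nonneg (Nat.cast_nonneg _) (sub_nonneg.2 h1)) hp.le)]
          rwa [div_le_iff₀ hp]
        · have h1 : (n : ℝ) ≤ 4 ^ k := by
            exact_mod_cast (not_le.1 hk).le.trans (Nat.lt_pow_self (by norm_num)).le
          simpa using h1
      rw [Real.norm_eq_abs, abs_mul, abs_of_nonneg (by positivity : 0 ≤ invSqrtCoeff k * q ^ k),
        mul_pow]
      exact mul_le_mul hle (mul_le_of_le_one_left (by positivity) (invSqrtCoeff_le_one k))
        (by positivity) (by positivity)
  rw [hD.tsum_eq] at hlim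
  convert hlim using 2
  · rename_i n
    have hfin : HasSum (fun k => (if k ≤ n then invSqrtCoeff (n - k) / invSqrtCoeff n else 0) *
        (invSqrtCoeff k * q ^ k)) (invSqrtConv q n / invSqrtCoeff n) := by
      have hsum : invSqrtConv q n / invSqrtCoeff n = ∑ k ∈ range (n + 1),
          (if k ≤ n then invSqrtCoeff (n - k) / invSqrtCoeff n else 0) *
            (invSqrtCoeff k * q ^ k) := by
        rw [invSqrtConv, sum_div]
        refine sum_congr rfl fun k hk => ?_
        rw [if_pos (Nat.lt_succ_iff.1 (mem_range.1 hk))]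
        ring
      rw [hsum]
      refine hasSum_sum_of_ne_finset_zero fun k hk => ?_
      rw [if_neg (by simpa [Nat.lt_succ_iff] using hk), zero_mul]
    rw [← ((hfin.sub hG).mul_left (n : ℝ)).tsum_eq]
    exact tsum_congr fun k => by simp only [F]; ring
  · have : 1 - q ≠ 0 := by linarith
    field_simp
    norm_num

/-- The square of `√(π n)` times the `n`-th coefficient of `(1 - x) ^ (-1 / 2)`. -/
noncomputable def wallisRatio (n : ℕ) : ℝ := π * n * invSqrtCoeff n ^ 2

lemma wallisRatio_eq (n : ℕ) :
    wallisRatio n = π / 2 * (2 * n / (2 * n + 1)) / Real.Wallis.W n := by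
  rw [wallisRatio, Real.Wallis.W_eq_factorial_ratio, invSqrtCoeff,
    Nat.centralBinom_eq_two_mul_choose,
    Nat.cast_choose ℝ (by omega : n ≤ 2 * n), show 2 * n - n = n by omega]
  rw [show (4 : ℝ) ^ n = 2 ^ (2 * n) by rw [pow_mul]; norm_num, show 4 * n = 2 * n * 2 by ring,
    pow_mul _ (2 * n) 2]
  have := Nat.factorial_ne_zero n
  have := Nat.factorial_ne_zero (2 * n)
  field_simp

lemma tendsto_wallisRatio : Tendsto wallisRatio atTop (nhds 1) := by
  have h1 := (((tendsto_const_div_two_mul_add_one 1).const_sub 1).const_mul (π / 2)).div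
    Real.Wallis.tendsto_W_nhds_pi_div_two (by positivity)
  rw [sub_zero, mul_one, div_self (by positivity)] at h1
  refine h1.congr fun n => ?_
  rw [wallisRatio_eq, Pi.div_apply]
  congr 2
  field_simp
  ring

lemma wallisRatio_succ {n : ℕ} (hn : 0 < n) :
    wallisRatio (n + 1) = wallisRatio n * (1 + 1 / (4 * n * (n + 1))) := by
  simp only [wallisRatio, invSqrtCoeff_succ]
  push_cast
  field_simp
  ring

lemma wallisRatio_pos {n : ℕ} (hn : 0 < n) : 0 < wallisRatio n := by
  have := invSqrtCoeff_pos n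
  unfold wallisRatio
  positivity

lemma tendsto_one_div_four_mul : Tendsto (fun n : ℕ => 1 / (4 * (n : ℝ))) atTop (nhds 0) :=
  tendsto_const_nhds.div_atTop (tendsto_natCast_atTop_atTop.const_mul_atTop four_pos)

lemma wallisRatio_mul_le_one {n : ℕ} (hn : 0 < n) : wallisRatio n * (1 + 1 / (4 * n)) ≤ 1 := by
  have hmono : Monotone fun m : ℕ =>
      wallisRatio (m + 1) * (1 + 1 / (4 * ((m + 1 : ℕ) : ℝ))) := by
    refine monotone_nat_of_le_succ fun m => ?_
    rw [wallisRatio_succ m.succ_pos, mul_assoc]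
    refine mul_le_mul_of_nonneg_left ?_ (wallisRatio_pos m.succ_pos).le
    push_cast
    rw [← sub_nonneg]
    have h : (1 + 1 / (4 * ((m : ℝ) + 1) * (m + 1 + 1))) * (1 + 1 / (4 * (m + 1 + 1))) -
        (1 + 1 / (4 * (m + 1))) = 1 / (16 * (m + 1) * (m + 2) ^ 2) := by
      field_simp
      ring
    rw [h]
    positivity
  have hlim := tendsto_wallisRatio.mul (tendsto_one_div_four_mul.const_add 1)
  rw [add_zero, mul_one, ← tendsto_add_atTop_iff_nat 1] at hlim
  obtain ⟨m, rfl⟩ := Nat.exists_eq_add_of_le' hn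
  exact hmono.ge_of_tendsto hlim m

lemma one_le_wallisRatio_add {n : ℕ} (hn : 0 < n) : 1 ≤ wallisRatio n + 1 / (4 * n) := by
  have hanti : Antitone fun m : ℕ => wallisRatio (m + 1) + 1 / (4 * ((m + 1 : ℕ) : ℝ)) := by
    refine antitone_nat_of_succ_le fun m => ?_
    have hle : wallisRatio (m + 1) ≤ 1 :=
      (le_mul_of_one_le_right (wallisRatio_pos m.succ_pos).le
        (le_add_of_nonneg_right (by positivity))).trans (wallisRatio_mul_le_one m.succ_pos)
    rw [wallisRatio_succ m.succ_pos, ← sub_nonneg]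
    push_cast
    have h : wallisRatio (m + 1) + 1 / (4 * ((m : ℝ) + 1)) -
        (wallisRatio (m + 1) * (1 + 1 / (4 * (m + 1) * (m + 1 + 1))) + 1 / (4 * (m + 1 + 1))) =
        (1 - wallisRatio (m + 1)) / (4 * (m + 1) * (m + 2)) := by
      field_simp
      ring
    rw [h]
    exact div_nonneg (sub_nonneg.2 hle) (by positivity)
  have hlim := tendsto_wallisRatio.add tendsto_one_div_four_mul
  rw [add_zero, ← tendsto_add_atTop_iff_nat 1] at hlim
  obtain ⟨m, rfl⟩ := Nat.exists_eq_add_of_le' hn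
  exact hanti.le_of_tendsto hlim m

lemma tendsto_nat_mul_wallisRatio_sub_one :
    Tendsto (fun n : ℕ => (n : ℝ) * (wallisRatio n - 1)) atTop (nhds (-(1 / 4))) := by
  have h := (tendsto_wallisRatio.div_const 4).neg
  refine tendsto_of_tendsto_of_tendsto_of_le_of_le' tendsto_const_nhds h ?_ ?_
  · filter_upwards [eventually_gt_atTop 0] with n hn
    have h1 := one_le_wallisRatio_add hn
    have h2 : (0 : ℝ) < n := by exact_mod_cast hn
    have h3 : (n : ℝ) * (1 / (4 * n)) = 1 / 4 := by field_simp
    nlinarith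
  · filter_upwards [eventually_gt_atTop 0] with n hn
    have h1 := wallisRatio_mul_le_one hn
    have h2 : (0 : ℝ) < n := by exact_mod_cast hn
    have h3 : (n : ℝ) * (wallisRatio n * (1 + 1 / (4 * n))) =
      n * wallisRatio n + wallisRatio n / 4 := by field_simp
    nlinarith

lemma tendsto_nat_mul_sqrt_mul_invSqrtCoeff_sub_one :
    Tendsto (fun n : ℕ => (n : ℝ) * (√π * √n * invSqrtCoeff n - 1)) atTop
      (nhds (-(1 / 8))) := by
  have hs : Tendsto (fun n => √(wallisRatio n) + 1) atTop (nhds (1 + 1)) := by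
    simpa using (tendsto_wallisRatio.sqrt).add_const 1
  have h := tendsto_nat_mul_wallisRatio_sub_one.div hs (by norm_num)
  convert h using 2
  · rename_i n
    have hb := (invSqrtCoeff_pos n).le
    have h1 : √(wallisRatio n) = √π * √n * invSqrtCoeff n := by
      rw [wallisRatio, Real.sqrt_mul (by positivity), Real.sqrt_mul pi_pos.le, Real.sqrt_sq hb]
    have h2 : wallisRatio n = (√π * √n * invSqrtCoeff n) ^ 2 := by
      rw [← h1, Real.sq_sqrt]
      unfold wallisRatio
      positivity
    have h3 : 0 ≤ √π * √n * invSqrtCoeff n := by positivity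
    simp only [Pi.div_apply, h1]
    rw [eq_div_iff (by positivity), h2]
    ring
  · norm_num

lemma iteratedDeriv_div_factorial_eq_invSqrtConv {ρ σ : ℝ} (hρσ : ρ * σ = 1) (n : ℕ) :
    iteratedDeriv n (fun t : ℝ => (t ^ 2 - (ρ + σ) * t + 1) ^ (-(1 : ℝ) / 2)) 0 / n.factorial =
      σ ^ n * invSqrtConv (ρ ^ 2) n := by
  have hlt (c : ℝ) : ∀ᶠ t in nhds (0 : ℝ), c * t < 1 :=
    (continuous_const.mul continuous_id).continuousAt.eventually_lt continuousAt_const (by simp)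
  have hev : (fun t : ℝ => (t ^ 2 - (ρ + σ) * t + 1) ^ (-(1 : ℝ) / 2)) =ᶠ[nhds 0]
      fun t => (1 - ρ * t) ^ (-(1 : ℝ) / 2) * (1 - σ * t) ^ (-(1 : ℝ) / 2) := by
    filter_upwards [hlt ρ, hlt σ] with t h1 h2
    rw [← Real.mul_rpow (by linarith) (by linarith)]
    congr 1
    linear_combination -t ^ 2 * hρσ
  have hc (c : ℝ) : ContDiffAt ℝ n (fun t : ℝ => (1 - c * t) ^ (-(1 : ℝ) / 2)) 0 :=
    ContDiffAt.rpow_const_of_ne (by fun_prop) (by simp)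
  rw [hev.iteratedDeriv_eq, iteratedDeriv_fun_mul (hc ρ) (hc σ), invSqrtConv, sum_div, mul_sum]
  refine sum_congr rfl fun k hk => ?_
  have hk : k ≤ n := Nat.lt_succ_iff.1 (mem_range.1 hk)
  rw [iteratedDeriv_one_sub_mul_rpow _ _ (by simp), iteratedDeriv_one_sub_mul_rpow _ _ (by simp),
    Nat.cast_choose ℝ hk]
  have h0 := Nat.factorial_ne_zero n
  have h1 := Nat.factorial_ne_zero k
  have h2 := Nat.factorial_ne_zero (n - k)
  have h3 : σ ^ n * (ρ ^ 2) ^ k = ρ ^ k * σ ^ (n - k) := by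
    obtain ⟨m, rfl⟩ := Nat.exists_eq_add_of_le hk
    have : ρ ^ k * σ ^ k = 1 := by rw [← mul_pow, hρσ, one_pow]
    rw [Nat.add_sub_cancel_left, pow_add]
    linear_combination (ρ ^ k * σ ^ m) * this
  simp only [mul_zero, sub_zero, Real.one_rpow, mul_one]
  field_simp
  linear_combination -(invSqrtCoeff k * invSqrtCoeff (n - k)) * h3

/-- Asymptotics of the Taylor coefficients `aₙ = f⁽ⁿ⁾(0)/n!` of `f(t) = (t² - 6t + 1)^{-1/2}`:
the refined expansion
`aₙ = ((3-2√2)^{-n-1/2}/√π)(2^{-5/4} n^{-1/2} + ((3-4√2)/(32·2^{3/4})) n^{-3/2} + o(n^{-3/2}))`,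
and in particular `aₙ ~ (1/(2^{5/4}√π)) n^{-1/2} (3-2√2)^{-n-1/2}`. -/
theorem taylor_coeff_inv_sqrt_asymp
    (a : ℕ → ℝ)
    (ha : ∀ n : ℕ, a n =
      iteratedDeriv n (fun t : ℝ => (t ^ 2 - 6 * t + 1) ^ (-(1 : ℝ) / 2)) 0 / (Nat.factorial n : ℝ)) :
    Tendsto (fun n : ℕ => (n : ℝ) ^ ((3 : ℝ) / 2) *
        (Real.sqrt π * (3 - 2 * Real.sqrt 2) ^ ((n : ℝ) + 1 / 2) * a n -
          (2 : ℝ) ^ (-(5 : ℝ) / 4) * (n : ℝ) ^ (-(1 : ℝ) / 2))) atTop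
      (nhds ((3 - 4 * Real.sqrt 2) / (32 * (2 : ℝ) ^ ((3 : ℝ) / 4)))) ∧
    Tendsto (fun n : ℕ => a n * (2 : ℝ) ^ ((5 : ℝ) / 4) * Real.sqrt π *
        (n : ℝ) ^ ((1 : ℝ) / 2) * (3 - 2 * Real.sqrt 2) ^ ((n : ℝ) + 1 / 2)) atTop
      (nhds 1) := by
  have h2 : √2 ^ 2 = 2 := Real.sq_sqrt zero_le_two
  have h2lo : 1.4 < √2 := by rw [Real.lt_sqrt] <;> norm_num
  have h2hi : √2 < 1.42 := by rw [Real.sqrt_lt'] <;> norm_num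
  set ρ : ℝ := 3 - 2 * √2 with hρ
  have hρ0 : 0 < ρ := by rw [hρ]; linarith
  have hρσ : ρ * (3 + 2 * √2) = 1 := by rw [hρ]; linear_combination -4 * h2
  have hq : 4 * ρ ^ 2 < 1 := by
    have : ρ < 0.2 := by rw [hρ]; linarith
    nlinarith
  have hq1 : 1 - ρ ^ 2 = 4 * √2 * ρ := by rw [hρ]; linear_combination -4 * h2 + 8 * h2
  set c : ℝ := (2 : ℝ) ^ (-(5 : ℝ) / 4) with hc
  have hG : ρ ^ ((1 : ℝ) / 2) * (1 - ρ ^ 2) ^ (-(1 : ℝ) / 2) = c := by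
    rw [hq1, Real.mul_rpow (by positivity) hρ0.le, mul_left_comm, ← Real.rpow_add hρ0,
      show (4 : ℝ) = 2 ^ (2 : ℝ) by norm_num, Real.sqrt_eq_rpow, ← Real.rpow_add two_pos,
      ← Real.rpow_mul two_pos.le]
    norm_num [hc]
  have ha' (n : ℕ) : ρ ^ ((n : ℝ) + 1 / 2) * a n = ρ ^ ((1 : ℝ) / 2) * invSqrtConv (ρ ^ 2) n := by
    have h := iteratedDeriv_div_factorial_eq_invSqrtConv hρσ n
    rw [show ρ + (3 + 2 * √2) = 6 by rw [hρ]; ring] at h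
    rw [ha, h, Real.rpow_add hρ0, Real.rpow_natCast]
    have : ρ ^ n * (3 + 2 * √2) ^ n = 1 := by rw [← mul_pow, hρσ, one_pow]
    linear_combination (ρ ^ ((1 : ℝ) / 2) * invSqrtConv (ρ ^ 2) n) * this
  have hw := tendsto_nat_mul_sqrt_mul_invSqrtCoeff_sub_one
  have hr := tendsto_nat_mul_invSqrtConv_ratio (sq_nonneg ρ) hq
  have hw1 := tendsto_of_tendsto_nat_mul_sub hw
  have hr1 := tendsto_of_tendsto_nat_mul_sub hr
  constructor
  · have h := ((hw.mul hr1).add hr).const_mul (ρ ^ ((1 : ℝ) / 2))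
    have hlim : ρ ^ ((1 : ℝ) / 2) * (-(1 / 8) * (1 - ρ ^ 2) ^ (-(1 : ℝ) / 2) +
        ρ ^ 2 / (4 * (1 - ρ ^ 2)) * (1 - ρ ^ 2) ^ (-(1 : ℝ) / 2)) =
        (3 - 4 * √2) / (32 * (2 : ℝ) ^ ((3 : ℝ) / 4)) := by
      have hcc : c * 2 ^ ((3 : ℝ) / 4) * √2 = 1 := by
        rw [hc, Real.sqrt_eq_rpow, ← Real.rpow_add two_pos, ← Real.rpow_add two_pos]
        norm_num
      have h3 : ρ ^ 2 / (4 * (1 - ρ ^ 2)) = ρ * √2 / 32 := by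
        rw [hq1]
        field_simp
        linear_combination -16 * h2
      have hpos : (0 : ℝ) < 2 ^ ((3 : ℝ) / 4) := by positivity
      rw [eq_div_iff (by positivity), h3]
      linear_combination 32 * (2 : ℝ) ^ ((3 : ℝ) / 4) * (-(1 / 8) + ρ * √2 / 32) * hG +
        (-4 + ρ * √2) * √2 / 2 * hcc +
        (-4 + ρ * √2) * (-(c * (2 : ℝ) ^ ((3 : ℝ) / 4)) / 2) * h2 + ρ / 2 * h2 + hρ
    rw [hlim] at h
    refine h.congr' ?_
    filter_upwards [eventually_gt_atTop 0] with n hn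
    have hn0 : (0 : ℝ) < n := by exact_mod_cast hn
    have hb := mul_div_cancel₀ (invSqrtConv (ρ ^ 2) n) (invSqrtCoeff_pos n).ne'
    have e1 : (n : ℝ) ^ ((3 : ℝ) / 2) = n * √n := by
      rw [Real.sqrt_eq_rpow, ← Real.rpow_one_add' hn0.le (by norm_num)]
      norm_num
    have e2 : √n * (n : ℝ) ^ (-(1 : ℝ) / 2) = 1 := by
      rw [Real.sqrt_eq_rpow, ← Real.rpow_add hn0]
      norm_num
    have h5 := ha' n
    rw [e1]
    generalize ρ ^ ((n : ℝ) + 1 / 2) = x at h5 ⊢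
    linear_combination (ρ ^ ((1 : ℝ) / 2) * n * √π * √n) * hb - n * √n * √π * h5 - n * hG +
      n * c * e2
  · have h := ((hw1.mul hr1).const_mul (ρ ^ ((1 : ℝ) / 2))).const_mul ((2 : ℝ) ^ ((5 : ℝ) / 4))
    have hlim : (2 : ℝ) ^ ((5 : ℝ) / 4) *
        (ρ ^ ((1 : ℝ) / 2) * (1 * (1 - ρ ^ 2) ^ (-(1 : ℝ) / 2))) = 1 := by
      rw [one_mul, hG, hc, ← Real.rpow_add two_pos]
      norm_num
    rw [hlim] at h
    refine h.congr fun n => ?_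
    have hb := mul_div_cancel₀ (invSqrtConv (ρ ^ 2) n) (invSqrtCoeff_pos n).ne'
    have h5 := ha' n
    rw [Real.sqrt_eq_rpow (n : ℝ)]
    generalize ρ ^ ((n : ℝ) + 1 / 2) = x at h5 ⊢
    linear_combination (2 ^ ((5 : ℝ) / 4) * ρ ^ ((1 : ℝ) / 2) * √π * (n : ℝ) ^ ((1 : ℝ) / 2)) * hb -
      (2 ^ ((5 : ℝ) / 4) * √π * (n : ℝ) ^ ((1 : ℝ) / 2)) * h5
end

section
/- Let g(t) = (t² − 6t + 1)^{−3/2}, which is real analytic on |t| < 3 − 2√2, and let α_n = g^{(n)}(0)/n! be its Taylor coefficients at 0, so that g(t) = ∑_{n=0}^∞ α_n t^n for |t| < 3 − 2√2. Then α_n = ((3 − 2√2)^{−n−3/2}/√π)·((1/(4·2^{3/4}))·n^{1/2} + ((24 − 9√2)/(128·2^{3/4}))·n^{−1/2} + o(n^{−1/2})) as n→∞; equivalently, lim_{n→∞} n^{1/2}·(√π·(3 − 2√2)^{n+3/2}·α_n − (1/(4·2^{3/4}))·n^{1/2}) = (24 − 9√2)/(128·2^{3/4}). -/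
open Finset Filter Real
open scoped Classical

lemma succ_mul_multichoose_succ (p : ℝ) (k : ℕ) :
    ((k : ℝ) + 1) * Ring.multichoose p (k + 1) = (p + k) * Ring.multichoose p k := by
  have h1 := Ring.factorial_nsmul_multichoose_eq_ascPochhammer p (k + 1)
  have h2 := Ring.factorial_nsmul_multichoose_eq_ascPochhammer p k
  rw [ascPochhammer_succ_right, Polynomial.smeval_mul, ← h2, Polynomial.smeval_add,
    Polynomial.smeval_X, Polynomial.smeval_natCast] at h1
  simp only [nsmul_eq_mul, pow_one, pow_zero, mul_one, Nat.factorial_succ, Nat.cast_mul,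
    Nat.cast_add, Nat.cast_one] at h1
  have hk : (Nat.factorial k : ℝ) ≠ 0 := by positivity
  apply mul_left_cancel₀ hk
  linear_combination h1

lemma multichoose_succ_eq (p : ℝ) (k : ℕ) :
    Ring.multichoose p (k + 1) = (p + k) / (k + 1) * Ring.multichoose p k := by
  have h := succ_mul_multichoose_succ p k
  have hk : (k : ℝ) + 1 ≠ 0 := by positivity
  field_simp
  linear_combination h

lemma succ_mul_multichoose_succ_eq_mul_multichoose_add_one (p : ℝ) (k : ℕ) :
    ((k : ℝ) + 1) * Ring.multichoose p (k + 1) = p * Ring.multichoose (p + 1) k := by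
  induction k with
  | zero => simp
  | succ k ih =>
    have h1 := succ_mul_multichoose_succ p (k + 1)
    have h2 := succ_mul_multichoose_succ (p + 1) k
    push_cast at h1 ⊢
    have hk : (k : ℝ) + 1 ≠ 0 := by positivity
    apply mul_left_cancel₀ hk
    linear_combination ((k : ℝ) + 1) * h1 + (p + k + 1) * ih - p * h2

lemma multichoose_pos {p : ℝ} (hp : 0 < p) (k : ℕ) : 0 < Ring.multichoose p k := by
  induction k with
  | zero => simp
  | succ k ih => rw [multichoose_succ_eq]; positivity

lemma hasSum_multichoose_mul_pow (p : ℝ) {x : ℝ} (hx : |x| < 1) :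
    HasSum (fun k : ℕ => Ring.multichoose p k * x ^ k) ((1 - x) ^ (-p)) := by
  have h := (Real.one_add_rpow_hasFPowerSeriesOnBall_zero (a := -p)).hasSum (y := -x)
    (by simpa [enorm_eq_nnnorm, ← NNReal.coe_lt_one] using hx)
  simp only [binomialSeries_apply, List.ofFn_const, List.prod_replicate,
    smul_eq_mul, ← sub_eq_add_neg, Ring.choose_neg'] at h
  rw [zero_sub, ← sub_eq_add_neg] at h
  refine h.congr_fun fun k => ?_
  rw [neg_pow x k, Int.negOnePow_def]
  rcases Nat.even_or_odd k with hk | hk <;> simp [hk.neg_one_pow, Units.smul_def]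

lemma hasSum_natCast_mul_multichoose_mul_pow (p : ℝ) {x : ℝ} (hx : |x| < 1) :
    HasSum (fun k : ℕ => (k : ℝ) * (Ring.multichoose p k * x ^ k))
      (p * x * (1 - x) ^ (-(p + 1))) := by
  rw [← hasSum_nat_add_iff' 1]
  simp only [Finset.range_one, Finset.sum_singleton, Nat.cast_zero, zero_mul, sub_zero]
  refine ((hasSum_multichoose_mul_pow (p + 1) hx).mul_left (p * x)).congr_fun ?_
  intro k
  have h := succ_mul_multichoose_succ_eq_mul_multichoose_add_one p k
  push_cast
  linear_combination x ^ (k + 1) * h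

lemma iteratedDeriv_one_sub_mul_rpow_neg (p c : ℝ) (n : ℕ) {t : ℝ} (ht : c * t < 1) :
    iteratedDeriv n (fun s : ℝ => (1 - c * s) ^ (-p)) t =
      Nat.factorial n * Ring.multichoose p n * c ^ n * (1 - c * t) ^ (-p - n) := by
  induction n generalizing t with
  | zero => simp
  | succ n ih =>
    have hopen : IsOpen {s : ℝ | c * s < 1} := isOpen_lt (by fun_prop) (by fun_prop)
    have hev : iteratedDeriv n (fun s : ℝ => (1 - c * s) ^ (-p)) =ᶠ[nhds t]
        fun s => Nat.factorial n * Ring.multichoose p n * c ^ n * (1 - c * s) ^ (-p - n) := by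
      filter_upwards [hopen.mem_nhds ht] with s hs using ih hs
    have hd : HasDerivAt (fun s : ℝ => 1 - c * s) (-c) t := by
      simpa using ((hasDerivAt_id t).const_mul c).const_sub 1
    have hd' := (hd.rpow_const (p := -p - n) (Or.inl (by linarith))).const_mul
      (Nat.factorial n * Ring.multichoose p n * c ^ n)
    rw [iteratedDeriv_succ, hev.deriv_eq, hd'.deriv]
    have h := succ_mul_multichoose_succ p n
    rw [show -p - ((n + 1 : ℕ) : ℝ) = -p - n - 1 by push_cast; ring, Nat.factorial_succ]
    push_cast
    linear_combination (-(Nat.factorial n : ℝ) * c ^ (n + 1) * (1 - c * t) ^ (-p - n - 1)) * h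

lemma contDiffAt_one_sub_mul_rpow (q c : ℝ) (n : WithTop ℕ∞) :
    ContDiffAt ℝ n (fun s : ℝ => (1 - c * s) ^ q) 0 :=
  ContDiffAt.rpow_const_of_ne (by fun_prop) (by simp)

/-- The Taylor coefficients of a product of two binomial series. -/
lemma iteratedDeriv_mul_rpow_neg_div_factorial (p c d : ℝ) (n : ℕ) :
    iteratedDeriv n (fun t : ℝ => ((1 - c * t) * (1 - d * t)) ^ (-p)) 0 / Nat.factorial n =
      ∑ k ∈ Finset.range (n + 1),
        Ring.multichoose p k * c ^ k * (Ring.multichoose p (n - k) * d ^ (n - k)) := by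
  have hpos : ∀ e : ℝ, ∀ᶠ t in nhds (0 : ℝ), 0 ≤ 1 - e * t := fun e => by
    have : Tendsto (fun t : ℝ => 1 - e * t) (nhds 0) (nhds 1) := by
      have : Continuous fun t : ℝ => 1 - e * t := by fun_prop
      simpa using this.tendsto 0
    filter_upwards [this.eventually (lt_mem_nhds one_pos)] with t ht using ht.le
  have hev : (fun t : ℝ => ((1 - c * t) * (1 - d * t)) ^ (-p)) =ᶠ[nhds 0]
      (fun t : ℝ => (1 - c * t) ^ (-p)) * fun t : ℝ => (1 - d * t) ^ (-p) := by
    filter_upwards [hpos c, hpos d] with t h1 h2 using Real.mul_rpow h1 h2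
  rw [hev.iteratedDeriv_eq, iteratedDeriv_mul (contDiffAt_one_sub_mul_rpow _ _ _)
    (contDiffAt_one_sub_mul_rpow _ _ _), Finset.sum_div]
  refine Finset.sum_congr rfl fun k hk => ?_
  have hk' : k ≤ n := by grind
  rw [iteratedDeriv_one_sub_mul_rpow_neg p c k (by simp),
    iteratedDeriv_one_sub_mul_rpow_neg p d (n - k) (by simp), Nat.cast_choose ℝ hk']
  simp only [mul_zero, sub_zero, Real.one_rpow, mul_one]
  field_simp

lemma multichoose_three_halves_sq (n : ℕ) :
    (Ring.multichoose (3 / 2 : ℝ) n) ^ 2 = (2 * n + 1) / Real.Wallis.W n := by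
  induction n with
  | zero => simp [Real.Wallis.W]
  | succ n ih =>
    have := Real.Wallis.W_pos n
    rw [multichoose_succ_eq, mul_pow, ih, Real.Wallis.W_succ]
    push_cast
    field_simp
    ring

lemma tendsto_pi_mul_multichoose_three_halves_sq_div {s : ℕ → ℝ}
    (hs : Tendsto (fun n => s n / n) atTop (nhds 1)) :
    Tendsto (fun n : ℕ => π * (Ring.multichoose (3 / 2 : ℝ) n) ^ 2 / s n) atTop (nhds 4) := by
  have h1 : Tendsto (fun n : ℕ => (2 + 1 / (n : ℝ)) / (s n / n)) atTop (nhds ((2 + 0) / 1)) :=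
    (tendsto_const_nhds.add tendsto_one_div_atTop_nhds_zero_nat).div hs one_ne_zero
  have h2 := (h1.mul (Real.Wallis.tendsto_W_nhds_pi_div_two.inv₀ (by positivity))).const_mul π
  have e : π * ((2 + 0) / 1 * (π / 2)⁻¹) = 4 := by field_simp; norm_num
  rw [e] at h2
  refine h2.congr' ?_
  filter_upwards [eventually_gt_atTop 0] with n hn
  have hn' : (n : ℝ) ≠ 0 := by positivity
  have := Real.Wallis.W_pos n
  rw [multichoose_three_halves_sq]
  by_cases h0 : s n = 0
  · simp [h0]
  · field_simp

lemma tendsto_natCast_add_const_add_div (a b : ℝ) :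
    Tendsto (fun n : ℕ => ((n : ℝ) + a + b / (n + 1)) / n) atTop (nhds 1) := by
  have h0 : Tendsto (fun n : ℕ => 1 / ((n : ℝ) + 1)) atTop (nhds 0) :=
    tendsto_one_div_add_atTop_nhds_zero_nat
  have h1 : Tendsto (fun n : ℕ => 1 / (n : ℝ)) atTop (nhds 0) :=
    tendsto_one_div_atTop_nhds_zero_nat
  have h2 := (((h1.const_mul a).const_add 1).add ((h0.mul h1).const_mul b))
  simp only [mul_zero, add_zero] at h2
  refine h2.congr' ?_
  filter_upwards [eventually_gt_atTop 0] with n hn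
  have hn' : (n : ℝ) ≠ 0 := by positivity
  field_simp

lemma four_mul_add_three_le_pi_mul_multichoose_sq (n : ℕ) :
    4 * (n : ℝ) + 3 ≤ π * (Ring.multichoose (3 / 2 : ℝ) n) ^ 2 := by
  have hlim := tendsto_pi_mul_multichoose_three_halves_sq_div
    (tendsto_natCast_add_const_add_div (3 / 4) 0)
  have hanti : Antitone fun n : ℕ =>
      π * (Ring.multichoose (3 / 2 : ℝ) n) ^ 2 / ((n : ℝ) + 3 / 4 + 0 / (n + 1)) := by
    refine antitone_nat_of_succ_le fun n => ?_
    have hn := n.cast_nonneg (α := ℝ)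
    have key : ((3 / 2 + n : ℝ) / (n + 1)) ^ 2 / ((n : ℝ) + 1 + 3 / 4) ≤ 1 / (n + 3 / 4) := by
      rw [div_pow, div_div, div_le_div_iff₀ (by positivity) (by positivity)]
      nlinarith
    have h := mul_le_mul_of_nonneg_left key
      (show 0 ≤ π * Ring.multichoose (3 / 2 : ℝ) n ^ 2 by positivity)
    rw [multichoose_succ_eq]
    push_cast
    simp only [zero_div, add_zero]
    convert h using 1 <;> ring
  have h := hanti.le_of_tendsto hlim n
  rw [le_div_iff₀ (by positivity)] at h
  simp only [zero_div, add_zero] at h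
  linarith

lemma pi_mul_multichoose_sq_le (n : ℕ) :
    π * (Ring.multichoose (3 / 2 : ℝ) n) ^ 2 ≤ 4 * (n : ℝ) + 3 + 4 / (n + 1) := by
  have hlim := tendsto_pi_mul_multichoose_three_halves_sq_div
    (tendsto_natCast_add_const_add_div (3 / 4) 1)
  have hmono : Monotone fun n : ℕ =>
      π * (Ring.multichoose (3 / 2 : ℝ) n) ^ 2 / ((n : ℝ) + 3 / 4 + 1 / (n + 1)) := by
    refine monotone_nat_of_le_succ fun n => ?_
    have hn := n.cast_nonneg (α := ℝ)
    have key : 1 / ((n : ℝ) + 3 / 4 + 1 / (n + 1)) ≤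
        ((3 / 2 + n : ℝ) / (n + 1)) ^ 2 / ((n : ℝ) + 1 + 3 / 4 + 1 / (n + 1 + 1)) := by
      rw [div_pow, div_div, div_le_div_iff₀ (by positivity) (by positivity)]
      field_simp
      ring_nf
      nlinarith [pow_nonneg hn 2, pow_nonneg hn 3, pow_nonneg hn 4]
    have h := mul_le_mul_of_nonneg_left key
      (show 0 ≤ π * Ring.multichoose (3 / 2 : ℝ) n ^ 2 by positivity)
    rw [multichoose_succ_eq]
    push_cast
    convert h using 1 <;> ring
  have h := hmono.ge_of_tendsto hlim n
  rw [div_le_iff₀ (by positivity)] at h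
  linarith [show (4 : ℝ) / (n + 1) = 4 * (1 / (n + 1)) by ring]

/-- The deviation of the `(n - k)`-th binomial coefficient from its leading asymptotics. -/
noncomputable def multichooseDeviation (n k : ℕ) : ℝ :=
  √n * ((if k ≤ n then √π * Ring.multichoose (3 / 2 : ℝ) (n - k) else 0) - 2 * √n)

lemma tendsto_multichooseDeviation (k : ℕ) :
    Tendsto (fun n => multichooseDeviation n k) atTop (nhds (3 / 4 - (k : ℝ))) := by
  set a : ℕ → ℝ := fun n => Ring.multichoose (3 / 2 : ℝ) n with ha
  have hsub : Tendsto (fun n : ℕ => n - k) atTop atTop := tendsto_sub_atTop_nat k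
  have hnum : Tendsto (fun n : ℕ => π * a n ^ 2 - 4 * n) atTop (nhds 3) := by
    have h0 : Tendsto (fun n : ℕ => 3 + 4 * (1 / ((n : ℝ) + 1))) atTop (nhds (3 + 4 * 0)) :=
      (tendsto_one_div_add_atTop_nhds_zero_nat.const_mul 4).const_add 3
    rw [mul_zero, add_zero] at h0
    refine tendsto_of_tendsto_of_tendsto_of_le_of_le tendsto_const_nhds h0 (fun n => ?_)
      (fun n => ?_)
    · have := four_mul_add_three_le_pi_mul_multichoose_sq n
      simp only [ha]; linarith
    · have := pi_mul_multichoose_sq_le n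
      have e : (4 : ℝ) / (n + 1) = 4 * (1 / (n + 1)) := by ring
      simp only [ha]; linarith
  have hnum' : Tendsto (fun n : ℕ => π * a (n - k) ^ 2 - 4 * n) atTop (nhds (3 - 4 * (k : ℝ))) := by
    refine ((hnum.comp hsub).sub_const (4 * (k : ℝ))).congr' ?_
    filter_upwards [eventually_ge_atTop k] with n hn
    simp only [Function.comp, Nat.cast_sub hn]
    ring
  have hratio : Tendsto (fun n : ℕ => √π * a (n - k) / √n) atTop (nhds 2) := by
    have h1 : Tendsto (fun n : ℕ => (π * a (n - k) ^ 2 - 4 * n) * (1 / n) + 4) atTop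
        (nhds ((3 - 4 * (k : ℝ)) * 0 + 4)) :=
      (hnum'.mul tendsto_one_div_atTop_nhds_zero_nat).add_const 4
    have h2 := (Real.continuous_sqrt.tendsto _).comp h1
    rw [mul_zero, zero_add, show (4 : ℝ) = 2 ^ 2 by norm_num, Real.sqrt_sq (by norm_num)] at h2
    refine h2.congr' ?_
    filter_upwards [eventually_gt_atTop 0] with n hn
    have hn' : (n : ℝ) ≠ 0 := by positivity
    have hp : 0 < a (n - k) := multichoose_pos (by norm_num) _
    rw [Function.comp, show (π * a (n - k) ^ 2 - 2 ^ 2 * n) * (1 / n) + 2 ^ 2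
      = π * a (n - k) ^ 2 / n by field_simp; ring, Real.sqrt_div (by positivity),
      Real.sqrt_mul (by positivity), Real.sqrt_sq hp.le]
  have h := hnum'.div (hratio.add_const 2) (by norm_num)
  rw [show (3 - 4 * (k : ℝ)) / (2 + 2) = 3 / 4 - k by ring] at h
  refine h.congr' ?_
  filter_upwards [eventually_ge_atTop k, eventually_gt_atTop 0] with n hn hn0
  have hp : 0 < a (n - k) := multichoose_pos (by norm_num) _
  have hs : 0 < √(n : ℝ) := by positivity
  have e1 : √(n : ℝ) ^ 2 = n := Real.sq_sqrt (by positivity)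
  have e2 : √π ^ 2 = π := Real.sq_sqrt (by positivity)
  simp only [multichooseDeviation, if_pos hn, Pi.div_apply]
  rw [div_eq_iff (by positivity)]
  field_simp
  change _ = (√π * a (n - k) - √(n : ℝ) * 2) * _
  linear_combination (4 : ℝ) * e1 - a (n - k) ^ 2 * e2

lemma abs_multichooseDeviation_le (n k : ℕ) : |multichooseDeviation n k| ≤ 2 * (k : ℝ) + 4 := by
  have e1 : √(n : ℝ) ^ 2 = n := Real.sq_sqrt (by positivity)
  have e2 : √π ^ 2 = π := Real.sq_sqrt (by positivity)
  have hs : 0 ≤ √(n : ℝ) := by positivity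
  unfold multichooseDeviation
  split_ifs with hkn
  · set b := Ring.multichoose (3 / 2 : ℝ) (n - k)
    have hb : 0 < √π * b := mul_pos (by positivity) (multichoose_pos (by norm_num) _)
    have h1 := four_mul_add_three_le_pi_mul_multichoose_sq (n - k)
    have h2 := pi_mul_multichoose_sq_le (n - k)
    have h3 : (4 : ℝ) / ((n - k : ℕ) + 1) ≤ 4 := div_le_self (by norm_num) (by simp)
    rw [Nat.cast_sub hkn] at h1 h2 h3
    have hk : (0 : ℝ) ≤ k := k.cast_nonneg
    have hdiff : |(√π * b) ^ 2 - (2 * √(n : ℝ)) ^ 2| ≤ 4 * (k : ℝ) + 8 := by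
      rw [mul_pow, mul_pow, e1, e2, abs_le]
      constructor <;> linarith
    have hfac : 2 * |√(n : ℝ) * (√π * b - 2 * √n)| ≤ |(√π * b) ^ 2 - (2 * √(n : ℝ)) ^ 2| := by
      rw [sq_sub_sq, abs_mul, abs_mul, abs_of_nonneg hs,
        abs_of_nonneg (show 0 ≤ √π * b + 2 * √(n : ℝ) by positivity)]
      nlinarith [abs_nonneg (√π * b - 2 * √n)]
    linarith
  · have : (n : ℝ) ≤ k := by exact_mod_cast (not_le.mp hkn).le
    rw [show √(n : ℝ) * (0 - 2 * √n) = -(2 * n) by linear_combination (-2 : ℝ) * e1, abs_neg,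
      abs_of_nonneg (by positivity)]
    linarith

lemma tendsto_sum_multichoose_mul_pow {x : ℝ} (hx0 : 0 ≤ x) (hx : x < 1) :
    Tendsto (fun n : ℕ => √n * (√π * ∑ k ∈ Finset.range (n + 1),
        Ring.multichoose (3 / 2 : ℝ) k * x ^ k * Ring.multichoose (3 / 2 : ℝ) (n - k) -
        2 * (1 - x) ^ (-(3 / 2 : ℝ)) * √n)) atTop
      (nhds (3 / 4 * (1 - x) ^ (-(3 / 2 : ℝ)) - 3 / 2 * x * (1 - x) ^ (-(3 / 2 + 1 : ℝ)))) := by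
  have hx' : |x| < 1 := by rwa [abs_of_nonneg hx0]
  set w : ℕ → ℝ := fun k => Ring.multichoose (3 / 2 : ℝ) k * x ^ k with hw
  have hw0 : ∀ k, 0 ≤ w k := fun k =>
    mul_nonneg (multichoose_pos (by norm_num) k).le (pow_nonneg hx0 k)
  have hS := hasSum_multichoose_mul_pow (3 / 2) hx'
  have hT := hasSum_natCast_mul_multichoose_mul_pow (3 / 2) hx'
  have hlim : Tendsto (fun n => ∑' k, w k * multichooseDeviation n k) atTop
      (nhds (∑' k, w k * (3 / 4 - (k : ℝ)))) := by
    refine tendsto_tsum_of_dominated_convergence (bound := fun k : ℕ => 2 * ((k : ℝ) * w k) + 4 * w k)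
      ((hT.summable.mul_left 2).add (hS.summable.mul_left 4))
      (fun k => (tendsto_multichooseDeviation k).const_mul _) (Eventually.of_forall fun n k => ?_)
    rw [Real.norm_eq_abs, abs_mul, abs_of_nonneg (hw0 k)]
    nlinarith [mul_le_mul_of_nonneg_left (abs_multichooseDeviation_le n k) (hw0 k)]
  have hval : HasSum (fun k => w k * (3 / 4 - (k : ℝ)))
      (3 / 4 * (1 - x) ^ (-(3 / 2 : ℝ)) - 3 / 2 * x * (1 - x) ^ (-(3 / 2 + 1 : ℝ))) := by
    refine ((hS.mul_left (3 / 4)).sub hT).congr_fun fun k => ?_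
    simp only [hw]; ring
  rw [hval.tsum_eq] at hlim
  refine hlim.congr fun n => HasSum.tsum_eq ?_
  have hfin : HasSum (fun k => if k ≤ n then w k * Ring.multichoose (3 / 2 : ℝ) (n - k) else 0)
      (∑ k ∈ Finset.range (n + 1), w k * Ring.multichoose (3 / 2 : ℝ) (n - k)) := by
    rw [Finset.sum_congr rfl fun k hk => (if_pos (by grind : k ≤ n)).symm]
    exact hasSum_sum_of_ne_finset_zero fun k hk => if_neg (by grind)
  refine (((hfin.mul_left √π).sub ((hS.mul_left 2).mul_right √n)).mul_left √n).congr_fun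
    fun k => ?_
  simp only [multichooseDeviation, hw]
  split_ifs <;> ring

/-- Asymptotics of the Taylor coefficients `αₙ = g⁽ⁿ⁾(0)/n!` of `g(t) = (t² - 6t + 1)^{-3/2}`:
`αₙ = ((3-2√2)^{-n-3/2}/√π)((1/(4·2^{3/4})) n^{1/2} + ((24-9√2)/(128·2^{3/4})) n^{-1/2} + o(n^{-1/2}))`,
stated equivalently as a limit. -/
theorem taylor_coeff_inv_cube_sqrt_asymp
    (α : ℕ → ℝ)
    (hα : ∀ n : ℕ, α n =
      iteratedDeriv n (fun t : ℝ => (t ^ 2 - 6 * t + 1) ^ (-(3 : ℝ) / 2)) 0 / (Nat.factorial n : ℝ)) :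
    Tendsto (fun n : ℕ => (n : ℝ) ^ ((1 : ℝ) / 2) *
        (Real.sqrt π * (3 - 2 * Real.sqrt 2) ^ ((n : ℝ) + 3 / 2) * α n -
          (1 / (4 * (2 : ℝ) ^ ((3 : ℝ) / 4))) * (n : ℝ) ^ ((1 : ℝ) / 2))) atTop
      (nhds ((24 - 9 * Real.sqrt 2) / (128 * (2 : ℝ) ^ ((3 : ℝ) / 4)))) := by
  set ρ : ℝ := 3 - 2 * √2 with hρ
  set R : ℝ := 3 + 2 * √2 with hR
  have h2 : √2 ^ 2 = (2 : ℝ) := Real.sq_sqrt (by norm_num)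
  have h2pos : 0 < √(2 : ℝ) := by positivity
  have hρpos : 0 < ρ := by nlinarith
  have hRρ : R * ρ = 1 := by linear_combination (-4 : ℝ) * h2
  have hρ1 : ρ < 1 := by nlinarith
  have hx0 : 0 ≤ ρ ^ 2 := by positivity
  have hx1 : ρ ^ 2 < 1 := by nlinarith
  have hone : 1 - ρ ^ 2 = 4 * √2 * ρ := by linear_combination (4 : ℝ) * h2
  clear_value ρ R
  have hcoeff : ∀ n, ρ ^ n * α n = ∑ k ∈ Finset.range (n + 1),
      Ring.multichoose (3 / 2 : ℝ) k * (ρ ^ 2) ^ k * Ring.multichoose (3 / 2 : ℝ) (n - k) := by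
    intro n
    have hfun : (fun t : ℝ => (t ^ 2 - 6 * t + 1) ^ (-(3 : ℝ) / 2)) =
        fun t : ℝ => ((1 - ρ * t) * (1 - R * t)) ^ (-(3 / 2 : ℝ)) := by
      funext t
      rw [neg_div]
      congr 1
      linear_combination (-t ^ 2) * hRρ + t * hρ + t * hR
    rw [hα, hfun, iteratedDeriv_mul_rpow_neg_div_factorial, Finset.mul_sum]
    refine Finset.sum_congr rfl fun k hk => ?_
    obtain ⟨m, rfl⟩ := Nat.exists_eq_add_of_le (show k ≤ n by grind)
    have hm : R ^ m * ρ ^ m = 1 := by rw [← mul_pow, hRρ, one_pow]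
    rw [Nat.add_sub_cancel_left]
    linear_combination (Ring.multichoose (3 / 2 : ℝ) k * Ring.multichoose (3 / 2 : ℝ) m *
      (ρ ^ k) ^ 2) * hm
  have hconst : ρ ^ (3 / 2 : ℝ) * (1 - ρ ^ 2) ^ (-(3 / 2 : ℝ)) =
      1 / (8 * (2 : ℝ) ^ (3 / 4 : ℝ)) := by
    have h4 : (4 : ℝ) ^ (3 / 2 : ℝ) = 8 := by
      rw [show (4 : ℝ) = 2 ^ (2 : ℝ) by norm_num, ← Real.rpow_mul (by norm_num)]
      norm_num
    have hs : √(2 : ℝ) ^ (3 / 2 : ℝ) = 2 ^ (3 / 4 : ℝ) := by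
      rw [Real.sqrt_eq_rpow, ← Real.rpow_mul (by norm_num)]
      norm_num
    rw [hone, Real.rpow_neg (by positivity), Real.mul_rpow (by positivity) hρpos.le,
      Real.mul_rpow (by norm_num) h2pos.le, h4, hs]
    have := Real.rpow_pos_of_pos hρpos (3 / 2)
    field_simp
  have hpow : (1 - ρ ^ 2) ^ (-(3 / 2 + 1 : ℝ)) = (1 - ρ ^ 2) ^ (-(3 / 2 : ℝ)) / (1 - ρ ^ 2) := by
    rw [neg_add, ← sub_eq_add_neg, Real.rpow_sub_one (by linarith)]
  have hmain := (tendsto_sum_multichoose_mul_pow hx0 hx1).const_mul (ρ ^ (3 / 2 : ℝ))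
  have hlimit : ρ ^ (3 / 2 : ℝ) * (3 / 4 * (1 - ρ ^ 2) ^ (-(3 / 2 : ℝ)) -
      3 / 2 * ρ ^ 2 * (1 - ρ ^ 2) ^ (-(3 / 2 + 1 : ℝ))) =
      (24 - 9 * √2) / (128 * (2 : ℝ) ^ ((3 : ℝ) / 4)) := by
    have hq : ρ ^ 2 / (1 - ρ ^ 2) = (3 * √2 - 4) / 8 := by
      rw [hone, div_eq_div_iff (by positivity) (by norm_num)]
      linear_combination (8 * ρ) * hρ - 12 * ρ * h2
    calc _ = ρ ^ (3 / 2 : ℝ) * (1 - ρ ^ 2) ^ (-(3 / 2 : ℝ)) *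
          (3 / 4 - 3 / 2 * (ρ ^ 2 / (1 - ρ ^ 2))) := by rw [hpow]; ring
      _ = _ := by
        rw [hconst, hq]
        field_simp
        ring
  rw [hlimit] at hmain
  refine hmain.congr fun n => ?_
  rw [← hcoeff, ← Real.sqrt_eq_rpow, Real.rpow_add hρpos, Real.rpow_natCast]
  linear_combination (-2 * √(n : ℝ) ^ 2) * hconst
end
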